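/- arXiv:1809.05648 — 3 statements merged into one kernel-verified Lean document; each statement's English description precedes it below -/
import Mathlib

section
/- Let N ≥ 1, let 1 ≤ α ≤ 2, and let u₀ : ℝ^N → ℝ be a bounded measurable function with 0 ≤ u₀ ≤ 1 on ℝ^N such that the function x ↦ L_α(u₀(x)), with values in ℝ ∪ {-∞}, is concave on ℝ^N (i.e., L_α(u₀((1-μ)x+μy)) ≥ (1-μ)L_α(u₀(x)) + μ L_α(u₀(y)) for all x,y ∈ ℝ^N and μ ∈ [0,1]). Let u(x,t) = ∫_{ℝ^N} G(x-y,t) u₀(y) dy be the solution of the heat equation with initial datum u₀. Then for every t > 0 the function x ↦ L_α(u(x,t)) is concave on ℝ^N. -/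
open MeasureTheory Real

/-- `L_α(s) = -(-log s)^{1/α}` for `s > 0`, and `-∞` for `s ≤ 0`, as an `EReal`-valued
function. -/
noncomputable def Lfun (α : ℝ) (s : ℝ) : EReal :=
  if 0 < s then (((-((-Real.log s) ^ (1 / α))) : ℝ) : EReal) else ⊥

/-- Concavity of an `(ℝ ∪ {-∞})`-valued function on the whole space, with the conventions
`-∞ + a = -∞` and `-∞ ≥ -∞`. -/
def ERealConcaveOn {E : Type*} [AddCommGroup E] [Module ℝ E] (f : E → EReal) : Prop :=
  ∀ x y : E, ∀ μ : ℝ, 0 ≤ μ → μ ≤ 1 →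
    ((1 - μ : ℝ) : EReal) * f x + (μ : EReal) * f y ≤ f ((1 - μ) • x + μ • y)

/-- The Gauss kernel `G(x,t) = (4πt)^{-N/2} exp(-|x|²/(4t))`. -/
noncomputable def gauss (N : ℕ) (x : EuclideanSpace ℝ (Fin N)) (t : ℝ) : ℝ :=
  (4 * Real.pi * t) ^ (-(N : ℝ) / 2) * Real.exp (-‖x‖ ^ 2 / (4 * t))

/-- The heat semigroup `[e^{tΔ}u₀](x) = ∫ G(x-y,t) u₀(y) dy` on `ℝ^N`. -/
noncomputable def heatSol (N : ℕ) (u₀ : EuclideanSpace ℝ (Fin N) → ℝ) (t : ℝ)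
    (x : EuclideanSpace ℝ (Fin N)) : ℝ :=
  ∫ y, gauss N (x - y) t * u₀ y

/-- `u` is `α`-logconcave in `ℝ^N`: for all sufficiently small `κ > 0`, the function
`x ↦ L_α(κ u(x))` is concave as an `(ℝ ∪ {-∞})`-valued function. -/
def AlphaLogConcave {N : ℕ} (α : ℝ) (u : EuclideanSpace ℝ (Fin N) → ℝ) : Prop :=
  ∃ κ₀ : ℝ, 0 < κ₀ ∧ ∀ κ : ℝ, 0 < κ → κ ≤ κ₀ →
    ERealConcaveOn (fun x => Lfun α (κ * u x))

/-- `F : [0,1] → ℝ ∪ {-∞}` is admissible: strictly increasing and continuous on `(0,1]`,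
`F(0) = -∞`, and `F(s) ≠ -∞` for `s ∈ (0,1]`. -/
def Admissible (F : ℝ → EReal) : Prop :=
  StrictMonoOn F (Set.Ioc (0 : ℝ) 1) ∧ ContinuousOn F (Set.Ioc (0 : ℝ) 1) ∧
    F 0 = ⊥ ∧ ∀ s : ℝ, 0 < s → s ≤ 1 → F s ≠ ⊥

/-- `u` is `F`-concave in `ℝ^N`: for all sufficiently small `κ > 0`, one has
`0 ≤ κ u ≤ 1` and `x ↦ F(κ u(x))` is concave as an `(ℝ ∪ {-∞})`-valued function. -/
def FConcave {N : ℕ} (F : ℝ → EReal) (u : EuclideanSpace ℝ (Fin N) → ℝ) : Prop :=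
  ∃ κ₀ : ℝ, 0 < κ₀ ∧ ∀ κ : ℝ, 0 < κ → κ ≤ κ₀ →
    (∀ x, 0 ≤ κ * u x ∧ κ * u x ≤ 1) ∧
    ∀ x y : EuclideanSpace ℝ (Fin N), ∀ μ : ℝ, 0 ≤ μ → μ ≤ 1 →
      ((1 - μ : ℝ) : EReal) * F (κ * u x) + (μ : EReal) * F (κ * u y) ≤
        F (κ * u ((1 - μ) • x + μ • y))

/-- The zero extension of a function `u` on `Ω` to all of `ℝ^N`. -/
noncomputable def zeroExt {N : ℕ} (Ω : Set (EuclideanSpace ℝ (Fin N)))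
    (u : EuclideanSpace ℝ (Fin N) → ℝ) : EuclideanSpace ℝ (Fin N) → ℝ :=
  Ω.indicator u

/-- Concavity of an `(ℝ ∪ {-∞})`-valued function on a convex set `Ω`. -/
def ERealConcaveOnSet {E : Type*} [AddCommGroup E] [Module ℝ E]
    (Ω : Set E) (f : E → EReal) : Prop :=
  ∀ x ∈ Ω, ∀ y ∈ Ω, ∀ μ : ℝ, 0 ≤ μ → μ ≤ 1 →
    ((1 - μ : ℝ) : EReal) * f x + (μ : EReal) * f y ≤ f ((1 - μ) • x + μ • y)

/-!
For `a + b = 1` and weights `l`, `m` with `a l + b m = 1`, convexity of `s ↦ s ^ α` gives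
`(a X + b Y) ^ α ≤ p X ^ α + q Y ^ α` with `p = a l ^ (1 - α)` and `q = b m ^ (1 - α)`, and the
infimum of the right-hand side over all weights is the left-hand side. Hence concavity of `L_α ∘ u`
amounts to the family of inequalities `u(x) ^ p * u(y) ^ q ≤ u(a x + b y)`, each of which the heat
flow preserves. Indeed, at a spatial minimum of
`log u(a x + b y) - p log u(x) - q log u(y)` the first-order conditions and the second derivative
in the diagonal directions `(e, e)` show that the time derivative is nonnegative, provided
`a ^ 2 / p + b ^ 2 / q ≤ 1`. For the weights above the left-hand side is
`a l ^ (α - 1) + b m ^ (α - 1)`, which is at most `1` by concavity of `s ↦ s ^ (α - 1)`; this is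
where `α ≤ 2` enters.

The comparison argument needs a positive continuous datum vanishing at infinity. Such data are
obtained by writing `u₀ = exp (-w ^ α)` on the convex set `D = {u₀ > 0}` and replacing `w` by its
Lipschitz envelopes plus a small multiple of the norm; these converge off the boundary of `D`,
which is a null set.
-/

open Filter Set
open scoped Topology ZeroAtInfty

local notation:max "ℝ^(" N ")" => EuclideanSpace ℝ (Fin N)

section Calculus

lemma nonneg_of_hasDerivAt_hasDerivAt_of_forall_le {f f' : ℝ → ℝ} {x d : ℝ}
    (hf : ∀ s, HasDerivAt f (f' s) s) (hf' : HasDerivAt f' d x) (hmin : ∀ s, f x ≤ f s) :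
    0 ≤ d := by
  have hderiv : deriv f = f' := funext fun s => (hf s).deriv
  by_contra! hd
  have hmax : IsLocalMax f x := by
    refine isLocalMax_of_deriv_deriv_neg ?_ ?_ (hf x).continuousAt
    · rwa [hderiv, hf'.deriv]
    · exact IsLocalMin.deriv_eq_zero (Eventually.of_forall hmin)
  have hconst : f =ᶠ[𝓝 x] fun _ => f x := hmax.mono fun s hs => le_antisymm hs (hmin s)
  have hzero : f' =ᶠ[𝓝 x] fun _ => 0 := by simpa only [hderiv, deriv_const'] using hconst.deriv
  exact hd.ne (hf'.unique ((hasDerivAt_const x 0).congr_of_eventuallyEq hzero))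

variable {f f' g g' h h' : ℝ → ℝ} {f'' g'' h'' : ℝ}

lemma hasDerivAt_logDeriv {x : ℝ} (hf : HasDerivAt f (f' x) x) (hf' : HasDerivAt f' f'' x)
    (hx : f x ≠ 0) :
    HasDerivAt (fun s => f' s / f s) (f'' / f x - (f' x / f x) ^ 2) x :=
  (hf'.div hf hx).congr_deriv (by field_simp)

lemma sum_second_deriv_div_le_of_two_point_min {a b p q : ℝ} (hab : a + b = 1) (hp : 0 < p)
    (hq : 0 < q) (hpq : a ^ 2 / p + b ^ 2 / q ≤ 1)
    (f_pos : ∀ s, 0 < f s) (g_pos : ∀ s, 0 < g s) (h_pos : ∀ s, 0 < h s)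
    (hf : ∀ s, HasDerivAt f (f' s) s) (hf' : HasDerivAt f' f'' 0)
    (hg : ∀ s, HasDerivAt g (g' s) s) (hg' : HasDerivAt g' g'' 0)
    (hh : ∀ s, HasDerivAt h (h' s) s) (hh' : HasDerivAt h' h'' 0)
    (hmin : ∀ σ τ, log (h 0) - p * log (f 0) - q * log (g 0)
      ≤ log (h (a * σ + b * τ)) - p * log (f σ) - q * log (g τ)) :
    p * (f'' / f 0) + q * (g'' / g 0) ≤ h'' / h 0 := by
  have log_f s := (hf s).log (f_pos s).ne'
  have log_g s := (hg s).log (g_pos s).ne'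
  have log_h s := (hh s).log (h_pos s).ne'
  have log_h_scale (c : ℝ) : HasDerivAt (fun s => log (h (c * s))) (c * (h' 0 / h 0)) 0 := by
    have hc : HasDerivAt (fun s : ℝ => c * s) c 0 := by
      simpa using (hasDerivAt_id (0 : ℝ)).const_mul c
    have := HasDerivAt.comp (h := fun s => c * s) (0 : ℝ)
      (by simpa only [mul_zero] using log_h 0) hc
    exact this.congr_deriv (mul_comm _ _)
  have critical_f : a * (h' 0 / h 0) - p * (f' 0 / f 0) = 0 :=
    IsLocalMin.hasDerivAt_eq_zero
      (Eventually.of_forall fun s => by simpa using hmin s 0)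
      ((log_h_scale a).sub ((log_f 0).const_mul p))
  have critical_g : b * (h' 0 / h 0) - q * (g' 0 / g 0) = 0 :=
    IsLocalMin.hasDerivAt_eq_zero
      (Eventually.of_forall fun s => by have := hmin 0 s; simp at this ⊢; linarith)
      ((log_h_scale b).sub ((log_g 0).const_mul q))
  have second_order := nonneg_of_hasDerivAt_hasDerivAt_of_forall_le
    (fun s => ((log_h s).sub ((log_f s).const_mul p)).sub ((log_g s).const_mul q))
    (((hasDerivAt_logDeriv (hh 0) hh' (h_pos 0).ne').sub
      ((hasDerivAt_logDeriv (hf 0) hf' (f_pos 0).ne').const_mul p)).sub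
      ((hasDerivAt_logDeriv (hg 0) hg' (g_pos 0).ne').const_mul q))
    fun s => by simpa only [Pi.sub_apply, ← add_mul, hab, one_mul] using hmin s s
  have hf_slope : p * (f' 0 / f 0) ^ 2 = a ^ 2 / p * (h' 0 / h 0) ^ 2 := by
    rw [eq_div_of_mul_eq hp.ne' (show f' 0 / f 0 * p = a * (h' 0 / h 0) by linarith)]
    field_simp
  have hg_slope : q * (g' 0 / g 0) ^ 2 = b ^ 2 / q * (h' 0 / h 0) ^ 2 := by
    rw [eq_div_of_mul_eq hq.ne' (show g' 0 / g 0 * q = b * (h' 0 / h 0) by linarith)]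
    field_simp
  have := mul_nonneg (sub_nonneg.2 hpq) (sq_nonneg (h' 0 / h 0))
  linarith

end Calculus

section ParabolicMinimumPrinciple

lemma parabolic_minimum_principle {X : Type*} [TopologicalSpace X] {Φ : ℝ → X → ℝ} {T : ℝ}
    {K : Set X} (hK : IsCompact K)
    (hcont : ContinuousOn (fun z : ℝ × X => Φ z.1 z.2) (Icc 0 T ×ˢ univ))
    (hinit : ∀ x, 0 ≤ Φ 0 x) (hout : ∀ t ∈ Icc 0 T, ∀ x ∉ K, 0 ≤ Φ t x)
    (hmin : ∀ t ∈ Ioc 0 T, ∀ x, (∀ y, Φ t x ≤ Φ t y) → ∃ d ≥ 0, HasDerivAt (Φ · x) d t)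
    {t : ℝ} (ht : t ∈ Icc 0 T) (x : X) : 0 ≤ Φ t x := by
  by_contra! hneg
  obtain ⟨ε, hε, hεT⟩ : ∃ ε > 0, Φ t x + ε * t < 0 := by
    have ht_pos : 0 < t := ht.1.lt_of_ne fun h => (hneg.trans_le (h ▸ hinit x)).false
    refine ⟨-Φ t x / (2 * t), by have := neg_pos.2 hneg; positivity, ?_⟩
    rw [show -Φ t x / (2 * t) * t = -Φ t x / 2 by field_simp]
    linarith
  have mem_K {s : ℝ} (hs : s ∈ Icc 0 T) {y : X} (hy : Φ s y + ε * s < 0) : y ∈ K := by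
    by_contra hyK
    linarith [hout s hs y hyK, mul_nonneg hε.le hs.1]
  have hcontε : ContinuousOn (fun z : ℝ × X => Φ z.1 z.2 + ε * z.1) (Icc 0 T ×ˢ K) :=
    (hcont.mono (prod_mono_right (subset_univ K))).add (by fun_prop)
  obtain ⟨⟨s, y⟩, ⟨hs, -⟩, hsy⟩ :=
    (isCompact_Icc.prod hK).exists_isMinOn ⟨(t, x), ht, mem_K ht hεT⟩ hcontε
  replace hsy : ∀ r ∈ Icc 0 T, ∀ z ∈ K, Φ s y + ε * s ≤ Φ r z + ε * r :=
    fun r hr z hz => hsy (mk_mem_prod hr hz)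
  have hsy_neg : Φ s y + ε * s < 0 := (hsy t ht x (mem_K ht hεT)).trans_lt hεT
  have hglobal : ∀ r ∈ Icc 0 T, ∀ z, Φ s y + ε * s ≤ Φ r z + ε * r := fun r hr z => by
    by_contra! hlt
    exact hlt.not_ge (hsy r hr z (mem_K hr (hlt.trans hsy_neg)))
  have hs_pos : 0 < s := hs.1.lt_of_ne fun h => by
    subst h
    linarith [hinit y]
  obtain ⟨d, hd, hderiv⟩ := hmin s ⟨hs_pos, hs.2⟩ y fun z => by linarith [hglobal s hs z]
  have hleft : d + ε ≤ 0 := by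
    have hslope := (hasDerivWithinAt_iff_tendsto_slope' self_notMem_Iio).1
      (hderiv.add ((hasDerivAt_id s).const_mul ε)).hasDerivWithinAt
    rw [mul_one] at hslope
    refine le_of_tendsto hslope ?_
    filter_upwards [Ioo_mem_nhdsLT hs_pos] with r hr
    rw [slope_def_field]
    refine div_nonpos_of_nonneg_of_nonpos ?_ (by linarith [hr.2])
    simpa using hglobal r ⟨hr.1.le, hr.2.le.trans hs.2⟩ y
  linarith

end ParabolicMinimumPrinciple

section ConvexityWeights

variable {α a b : ℝ}

lemma rpow_add_le_weighted_rpow_add (hα : 1 ≤ α) (ha : 0 ≤ a) (hb : 0 ≤ b) {l m X Y : ℝ}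
    (hl : 0 < l) (hm : 0 < m) (hlm : a * l + b * m = 1) (hX : 0 ≤ X) (hY : 0 ≤ Y) :
    (a * X + b * Y) ^ α ≤ a * l ^ (1 - α) * X ^ α + b * m ^ (1 - α) * Y ^ α := by
  have rescale {c Z : ℝ} (hc : 0 < c) (hZ : 0 ≤ Z) : c * (Z / c) ^ α = c ^ (1 - α) * Z ^ α := by
    rw [div_rpow hZ hc.le, rpow_sub hc, rpow_one]
    ring
  calc (a * X + b * Y) ^ α
    _ = (a * l * (X / l) + b * m * (Y / m)) ^ α := by congr 1; field_simp
    _ ≤ a * l * (X / l) ^ α + b * m * (Y / m) ^ α :=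
        (convexOn_rpow hα).2 (div_nonneg hX hl.le) (div_nonneg hY hm.le)
          (mul_nonneg ha hl.le) (mul_nonneg hb hm.le) hlm
    _ = a * l ^ (1 - α) * X ^ α + b * m ^ (1 - α) * Y ^ α := by
        rw [mul_assoc a, mul_assoc b, rescale hl hX, rescale hm hY]
        ring

lemma sq_div_weight_add_sq_div_weight_le_one (hα₁ : 1 ≤ α) (hα₂ : α ≤ 2) (ha : 0 ≤ a)
    (hb : 0 ≤ b) (hab : a + b = 1) {l m : ℝ} (hl : 0 < l) (hm : 0 < m)
    (hlm : a * l + b * m = 1) :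
    a ^ 2 / (a * l ^ (1 - α)) + b ^ 2 / (b * m ^ (1 - α)) ≤ 1 := by
  have sq_div {c r : ℝ} (hr : 0 < r) : c ^ 2 / (c * r ^ (1 - α)) = c * r ^ (α - 1) := by
    rw [sq, mul_div_mul_comm, ← neg_sub α 1, rpow_neg hr.le, div_inv_eq_mul, ← mul_assoc,
      div_mul_cancel_of_imp (fun h => h)]
  calc a ^ 2 / (a * l ^ (1 - α)) + b ^ 2 / (b * m ^ (1 - α))
    _ = a * l ^ (α - 1) + b * m ^ (α - 1) := by rw [sq_div hl, sq_div hm]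
    _ ≤ (a * l + b * m) ^ (α - 1) :=
        (concaveOn_rpow (by linarith) (by linarith)).2 hl.le hm.le ha hb hab
    _ = 1 := by rw [hlm, one_rpow]

lemma le_of_forall_weights_rpow_le (hα : 0 < α) (ha : 0 < a) (hb : 0 < b) {X Y Z : ℝ}
    (hX : 0 ≤ X) (hY : 0 ≤ Y) (hZ : 0 ≤ Z)
    (h : ∀ l m : ℝ, 0 < l → 0 < m → a * l + b * m = 1 →
      Z ^ α ≤ a * l ^ (1 - α) * X ^ α + b * m ^ (1 - α) * Y ^ α) :
    Z ≤ a * X + b * Y := by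
  suffices hpos : ∀ ε > 0, Z ≤ a * (X + ε) + b * (Y + ε) by
    have hlim : Tendsto (fun ε => a * (X + ε) + b * (Y + ε)) (𝓝[>] 0) (𝓝 (a * X + b * Y)) :=
      tendsto_nhdsWithin_of_tendsto_nhds (Continuous.tendsto' (by fun_prop) _ _ (by simp))
    exact ge_of_tendsto hlim (eventually_mem_nhdsWithin.mono hpos)
  intro ε hε
  set M := a * (X + ε) + b * (Y + ε) with hM
  have hM_pos : 0 < M := by positivity
  have optimal_weight {c V : ℝ} (hc : 0 < c) (hV : 0 ≤ V) :
      c * ((V + ε) / M) ^ (1 - α) * V ^ α ≤ c * (V + ε) * (M ^ α / M) := by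
    have hVε : 0 < V + ε := by positivity
    calc c * ((V + ε) / M) ^ (1 - α) * V ^ α
      _ ≤ c * ((V + ε) / M) ^ (1 - α) * (V + ε) ^ α := by gcongr; linarith
      _ = c * (V + ε) * (M ^ α / M) := by
          rw [div_rpow hVε.le hM_pos.le, rpow_sub hVε, rpow_sub hM_pos, rpow_one, rpow_one]
          field_simp
  refine (rpow_le_rpow_iff hZ hM_pos.le hα).1 ?_
  calc Z ^ α
    _ ≤ a * ((X + ε) / M) ^ (1 - α) * X ^ α + b * ((Y + ε) / M) ^ (1 - α) * Y ^ α :=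
        h _ _ (by positivity) (by positivity) (by rw [hM]; field_simp)
    _ ≤ a * (X + ε) * (M ^ α / M) + b * (Y + ε) * (M ^ α / M) :=
        add_le_add (optimal_weight ha hX) (optimal_weight hb hY)
    _ = M ^ α := by rw [← add_mul, ← hM]; field_simp

end ConvexityWeights

section LipschitzEnvelope

variable {E : Type*} [NormedAddCommGroup E] {D : Set E} {w : E → ℝ} {k : ℝ}

/-- The Pasch–Hausdorff envelope of `w` relative to `D`: the largest `k`-Lipschitz minorant of
`w` on `D`. It is only meaningful for nonempty `D`, since an empty real infimum is `0`. -/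
noncomputable def lipschitzEnvelope (D : Set E) (w : E → ℝ) (k : ℝ) (x : E) : ℝ :=
  ⨅ y : D, (w y + k * ‖x - y‖)

lemma lipschitzEnvelope_nonneg (hw : ∀ y ∈ D, 0 ≤ w y) (hk : 0 ≤ k) (x : E) :
    0 ≤ lipschitzEnvelope D w k x :=
  Real.iInf_nonneg fun y => add_nonneg (hw y y.2) (by positivity)

lemma lipschitzEnvelope_le (hw : ∀ y ∈ D, 0 ≤ w y) (hk : 0 ≤ k) (x : E) {y : E} (hy : y ∈ D) :
    lipschitzEnvelope D w k x ≤ w y + k * ‖x - y‖ := by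
  refine ciInf_le (f := fun y : D => w y + k * ‖x - y‖) ⟨0, ?_⟩ ⟨y, hy⟩
  rintro _ ⟨z, rfl⟩
  exact add_nonneg (hw z z.2) (by positivity)

lemma le_lipschitzEnvelope (hD : D.Nonempty) {x : E} {c : ℝ}
    (h : ∀ y ∈ D, c ≤ w y + k * ‖x - y‖) : c ≤ lipschitzEnvelope D w k x :=
  haveI := hD.to_subtype
  le_ciInf fun y => h y y.2

lemma convexOn_lipschitzEnvelope [NormedSpace ℝ E] (hD : D.Nonempty) (hw : ∀ y ∈ D, 0 ≤ w y)
    (hk : 0 ≤ k) (hconv : ConvexOn ℝ D w) : ConvexOn ℝ univ (lipschitzEnvelope D w k) := by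
  refine convexOn_iff_forall_pos.2 ⟨convex_univ, fun x _ y _ a b ha hb hab => ?_⟩
  simp only [smul_eq_mul]
  have key : ∀ x' ∈ D, ∀ y' ∈ D, lipschitzEnvelope D w k (a • x + b • y)
      ≤ a * (w x' + k * ‖x - x'‖) + b * (w y' + k * ‖y - y'‖) := fun x' hx' y' hy' => by
    calc lipschitzEnvelope D w k (a • x + b • y)
      _ ≤ w (a • x' + b • y') + k * ‖a • (x - x') + b • (y - y')‖ := by
          rw [smul_sub, smul_sub, sub_add_sub_comm]
          exact lipschitzEnvelope_le hw hk _ (hconv.1 hx' hy' ha.le hb.le hab)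
      _ ≤ (a * w x' + b * w y') + k * (a * ‖x - x'‖ + b * ‖y - y'‖) := by
          gcongr
          · exact hconv.2 hx' hy' ha.le hb.le hab
          · exact (convexOn_univ_norm (E := E)).2 trivial trivial ha.le hb.le hab
      _ = a * (w x' + k * ‖x - x'‖) + b * (w y' + k * ‖y - y'‖) := by ring
  have hx : ∀ y' ∈ D, (lipschitzEnvelope D w k (a • x + b • y) - b * (w y' + k * ‖y - y'‖)) / a
      ≤ lipschitzEnvelope D w k x := fun y' hy' =>
    le_lipschitzEnvelope hD fun x' hx' => by
      rw [div_le_iff₀' ha, sub_le_iff_le_add]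
      exact key x' hx' y' hy'
  have hy : (lipschitzEnvelope D w k (a • x + b • y) - a * lipschitzEnvelope D w k x) / b
      ≤ lipschitzEnvelope D w k y :=
    le_lipschitzEnvelope hD fun y' hy' => by
      rw [div_le_iff₀' hb]
      linarith [(div_le_iff₀' ha).1 (hx y' hy')]
  linarith [(div_le_iff₀' hb).1 hy]

lemma tendsto_lipschitzEnvelope_of_mem (hw : ∀ y ∈ D, 0 ≤ w y) {x : E} (hx : x ∈ D)
    (hcont : ContinuousWithinAt w D x) :
    Tendsto (fun k => lipschitzEnvelope D w k x) atTop (𝓝 (w x)) := by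
  refine tendsto_order.2 ⟨fun c hc => ?_, fun c hc => ?_⟩
  · obtain ⟨c', hcc', hc'⟩ := exists_between hc
    obtain ⟨r, hr, hball⟩ := Metric.mem_nhdsWithin_iff.1 (hcont.eventually (lt_mem_nhds hc'))
    filter_upwards [eventually_ge_atTop (c' / r), eventually_ge_atTop 0] with k hkr hk
    refine hcc'.trans_le (le_lipschitzEnvelope ⟨x, hx⟩ fun y hy => ?_)
    rcases lt_or_ge (dist y x) r with hyx | hyx
    · have : c' < w y := hball ⟨hyx, hy⟩
      have : 0 ≤ k * ‖x - y‖ := by positivity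
      linarith
    · rw [dist_comm, dist_eq_norm] at hyx
      have : c' ≤ k * ‖x - y‖ := ((div_le_iff₀ hr).1 hkr).trans (by gcongr)
      linarith [hw y hy]
  · filter_upwards [eventually_ge_atTop 0] with k hk
    exact (lipschitzEnvelope_le hw hk x hx).trans_lt (by simpa using hc)

lemma tendsto_lipschitzEnvelope_of_notMem_closure (hD : D.Nonempty) (hw : ∀ y ∈ D, 0 ≤ w y)
    {x : E} (hx : x ∉ closure D) :
    Tendsto (fun k => lipschitzEnvelope D w k x) atTop atTop := by
  have hdist : 0 < Metric.infDist x D := (Metric.infDist_pos_iff_notMem_closure hD).1 hx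
  refine tendsto_atTop_mono' _ ?_ (tendsto_id.atTop_mul_const hdist)
  filter_upwards [eventually_ge_atTop 0] with k hk
  refine le_lipschitzEnvelope hD fun y hy => ?_
  have : k * Metric.infDist x D ≤ k * ‖x - y‖ := by
    gcongr
    simpa only [dist_eq_norm] using Metric.infDist_le_dist_of_mem (x := x) hy
  simpa using this.trans (le_add_of_nonneg_left (hw y hy))

end LipschitzEnvelope

section GaussKernel

variable {N : ℕ} {t : ℝ}

lemma gauss_nonneg (z : ℝ^(N)) (ht : 0 ≤ t) : 0 ≤ gauss N z t := by
  unfold gauss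
  positivity

lemma gauss_pos (z : ℝ^(N)) (ht : 0 < t) : 0 < gauss N z t := by
  unfold gauss
  positivity

@[fun_prop]
lemma continuous_gauss (t : ℝ) : Continuous fun z : ℝ^(N) => gauss N z t := by
  unfold gauss
  fun_prop

variable (N) in
lemma integral_gauss (ht : 0 < t) : ∫ z, gauss N z t = 1 := by
  have hexp : ∫ z : ℝ^(N), exp (-‖z‖ ^ 2 / (4 * t)) = (4 * π * t) ^ ((N : ℝ) / 2) := by
    have hgauss := GaussianFourier.integral_rexp_neg_mul_sq_norm (V := ℝ^(N)) (b := 1 / (4 * t))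
      (by positivity)
    rw [finrank_euclideanSpace_fin, div_div_eq_mul_div, div_one, ← mul_assoc, mul_comm π] at hgauss
    rw [← hgauss]
    congr with z
    congr 1
    ring
  have hbase : 0 < 4 * π * t := by positivity
  simp only [gauss, integral_const_mul, hexp]
  rw [← rpow_add hbase, neg_div, neg_add_cancel, rpow_zero]

variable (N) in
lemma integrable_gauss (ht : 0 < t) : Integrable fun z => gauss N z t := by
  by_contra h
  exact one_ne_zero ((integral_gauss N ht).symm.trans (integral_undef h))

lemma gauss_sqrt_smul (z : ℝ^(N)) (ht : 0 < t) :
    gauss N (√t • z) t = (√t ^ N)⁻¹ * gauss N z 1 := by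
  have hscale : t ^ (-(N : ℝ) / 2) = (√t ^ N)⁻¹ := by
    rw [neg_div, rpow_neg ht.le, sqrt_eq_rpow, ← rpow_mul_natCast ht.le]
    congr 2
    ring
  rw [gauss, gauss, mul_one, mul_rpow (by positivity) ht.le, hscale, norm_smul,
    norm_of_nonneg (sqrt_nonneg t), mul_pow, sq_sqrt ht.le]
  have : -(t * ‖z‖ ^ 2) / (4 * t) = -‖z‖ ^ 2 / (4 * 1) := by field_simp
  rw [this]
  ring

/-- The derivative of the Gauss kernel `gauss N · t` at `z` in the direction `e`. -/
noncomputable def gaussLineDeriv (e z : ℝ^(N)) (t : ℝ) : ℝ :=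
  -(inner ℝ z e / (2 * t)) * gauss N z t

/-- The second derivative of the Gauss kernel `gauss N · t` at `z` in the direction `e`. -/
noncomputable def gaussLineDeriv₂ (e z : ℝ^(N)) (t : ℝ) : ℝ :=
  (inner ℝ z e ^ 2 / (4 * t ^ 2) - ‖e‖ ^ 2 / (2 * t)) * gauss N z t

@[fun_prop]
lemma continuous_gaussLineDeriv (e : ℝ^(N)) (t : ℝ) : Continuous (gaussLineDeriv e · t) := by
  unfold gaussLineDeriv
  fun_prop

@[fun_prop]
lemma continuous_gaussLineDeriv₂ (e : ℝ^(N)) (t : ℝ) : Continuous (gaussLineDeriv₂ e · t) := by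
  unfold gaussLineDeriv₂
  fun_prop

lemma hasLineDerivAt_gauss (e z : ℝ^(N)) (t : ℝ) :
    HasLineDerivAt ℝ (gauss N · t) (gaussLineDeriv e z t) z e := by
  have hline : HasDerivAt (fun s : ℝ => z + s • e) e 0 := by
    simpa using ((hasDerivAt_id (0 : ℝ)).smul_const e).const_add z
  refine ((hline.norm_sq.neg.div_const (4 * t)).exp.const_mul _).congr_deriv ?_
  simp only [gaussLineDeriv, gauss, Pi.neg_apply, zero_smul, add_zero]
  ring

lemma hasLineDerivAt_gaussLineDeriv (e z : ℝ^(N)) (t : ℝ) :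
    HasLineDerivAt ℝ (gaussLineDeriv e · t) (gaussLineDeriv₂ e z t) z e := by
  have hinner : HasDerivAt (fun s : ℝ => inner ℝ (z + s • e) e) (‖e‖ ^ 2) 0 := by
    simp only [inner_add_left, real_inner_smul_left, real_inner_self_eq_norm_sq]
    simpa using ((hasDerivAt_id (0 : ℝ)).mul_const (‖e‖ ^ 2)).const_add (inner ℝ z e)
  refine ((hinner.div_const (2 * t)).neg.mul (hasLineDerivAt_gauss e z t)).congr_deriv ?_
  simp only [gaussLineDeriv, gaussLineDeriv₂, Pi.neg_apply, zero_smul, add_zero]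
  ring

lemma hasDerivAt_gauss_time {ι : Type*} [Fintype ι] (b : OrthonormalBasis ι ℝ ℝ^(N)) (z : ℝ^(N))
    (ht : 0 < t) : HasDerivAt (gauss N z) (∑ i, gaussLineDeriv₂ (b i) z t) t := by
  have hsum : ∑ i, gaussLineDeriv₂ (b i) z t
      = (‖z‖ ^ 2 / (4 * t ^ 2) - N / (2 * t)) * gauss N z t := by
    simp only [gaussLineDeriv₂]
    rw [← Finset.sum_mul, Finset.sum_sub_distrib, ← Finset.sum_div, ← Finset.sum_div,
      b.sum_sq_inner_left]
    have hcard : Fintype.card ι = N := by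
      rw [← Module.finrank_eq_card_basis b.toBasis, finrank_euclideanSpace_fin]
    simp [hcard]
  have hpow : HasDerivAt (fun s => (4 * π * s) ^ (-(N : ℝ) / 2))
      (4 * π * (-(N : ℝ) / 2) * (4 * π * t) ^ (-(N : ℝ) / 2 - 1)) t := by
    refine HasDerivAt.rpow_const ?_ (Or.inl (by positivity))
    simpa using (hasDerivAt_id t).const_mul (4 * π)
  have hexp : HasDerivAt (fun s => -‖z‖ ^ 2 / (4 * s)) (‖z‖ ^ 2 / (4 * t ^ 2)) t := by
    have hlin : HasDerivAt (fun s : ℝ => 4 * s) 4 t := by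
      simpa using (hasDerivAt_id t).const_mul 4
    refine ((hasDerivAt_const t (-‖z‖ ^ 2)).div hlin (by positivity)).congr_deriv ?_
    field_simp
    ring
  rw [hsum]
  refine (hpow.mul hexp.exp).congr_deriv ?_
  rw [gauss, rpow_sub_one (by positivity)]
  field_simp
  ring

lemma one_add_mul_exp_neg_div_le {r c : ℝ} (hr : 0 ≤ r) (hc : 0 < c) :
    (1 + r) * exp (-r / c) ≤ (1 + 2 * c) * exp (-r / (2 * c)) := by
  have hone : 1 ≤ exp (r / (2 * c)) := one_le_exp (by positivity)
  have hlin : r ≤ 2 * c * exp (r / (2 * c)) := by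
    rw [← div_le_iff₀' (by positivity)]
    linarith [add_one_le_exp (r / (2 * c))]
  calc (1 + r) * exp (-r / c)
    _ ≤ ((1 + 2 * c) * exp (r / (2 * c))) * exp (-r / c) := by
        gcongr
        linarith
    _ = (1 + 2 * c) * exp (-r / (2 * c)) := by
        rw [mul_assoc, ← exp_add]
        congr 2
        field_simp
        ring

lemma gauss_le_of_mem_Ioo (z : ℝ^(N)) (ht : 0 < t) {s : ℝ} (hs : s ∈ Ioo (t / 2) (2 * t)) :
    gauss N z s ≤ (2 * π * t) ^ (-(N : ℝ) / 2) * exp (-‖z‖ ^ 2 / (8 * t)) := by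
  have hs_pos : 0 < s := (half_pos ht).trans hs.1
  refine mul_le_mul ?_ ?_ (exp_pos _).le (by positivity)
  · refine rpow_le_rpow_of_nonpos (by positivity) ?_ ?_
    · nlinarith [pi_pos, hs.1]
    · rw [neg_div]
      exact neg_nonpos.2 (by positivity)
  · rw [exp_le_exp, neg_div, neg_div]
    exact neg_le_neg
      (div_le_div_of_nonneg_left (sq_nonneg _) (by positivity) (by linarith [hs.2]))

variable (N) in
lemma exists_integrable_one_add_norm_sq_mul_gauss_le (ht : 0 < t) :
    ∃ B : ℝ^(N) → ℝ, Integrable B ∧ ∀ s ∈ Ioo (t / 2) (2 * t), ∀ z w : ℝ^(N), ‖w‖ ≤ 1 →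
      (1 + ‖z + w‖ ^ 2) * gauss N (z + w) s ≤ B z := by
  set A := (2 * π * t) ^ (-(N : ℝ) / 2)
  set B := (4 * π * (8 * t)) ^ (-(N : ℝ) / 2)
  have hA : 0 < A := by positivity
  have hB : 0 < B := by positivity
  refine ⟨fun z => A * (1 + 2 * (8 * t)) * exp (1 / (16 * t)) / B * gauss N z (8 * t),
    (integrable_gauss N (by positivity)).const_mul _, fun s hs z w hw => ?_⟩
  have hexp : exp (-‖z + w‖ ^ 2 / (2 * (8 * t)))
      ≤ exp (1 / (16 * t)) * exp (-‖z‖ ^ 2 / (4 * (8 * t))) := by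
    have hz : ‖z‖ ≤ ‖z + w‖ + 1 := by
      simpa only [add_sub_cancel_right] using (norm_sub_le (z + w) w).trans (by gcongr)
    have hsq : ‖z‖ ^ 2 / 2 - 1 ≤ ‖z + w‖ ^ 2 := by
      nlinarith [norm_nonneg z, sq_nonneg (‖z + w‖ - 1)]
    rw [← exp_add, exp_le_exp]
    calc -‖z + w‖ ^ 2 / (2 * (8 * t))
      _ ≤ -(‖z‖ ^ 2 / 2 - 1) / (2 * (8 * t)) := by gcongr
      _ = 1 / (16 * t) + -‖z‖ ^ 2 / (4 * (8 * t)) := by field_simp; ring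
  calc (1 + ‖z + w‖ ^ 2) * gauss N (z + w) s
    _ ≤ (1 + ‖z + w‖ ^ 2) * (A * exp (-‖z + w‖ ^ 2 / (8 * t))) := by
        gcongr
        exact gauss_le_of_mem_Ioo _ ht hs
    _ = A * ((1 + ‖z + w‖ ^ 2) * exp (-‖z + w‖ ^ 2 / (8 * t))) := by ring
    _ ≤ A * ((1 + 2 * (8 * t)) * (exp (1 / (16 * t)) * exp (-‖z‖ ^ 2 / (4 * (8 * t))))) := by
        refine mul_le_mul_of_nonneg_left ?_ hA.le
        refine (one_add_mul_exp_neg_div_le (sq_nonneg _) (by positivity)).trans ?_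
        gcongr
    _ = A * (1 + 2 * (8 * t)) * exp (1 / (16 * t)) / B * gauss N z (8 * t) := by
        rw [show gauss N z (8 * t) = B * exp (-‖z‖ ^ 2 / (4 * (8 * t))) from rfl]
        field_simp

lemma norm_gaussLineDeriv_le (e z : ℝ^(N)) (ht : 0 < t) :
    ‖gaussLineDeriv e z t‖ ≤ ‖e‖ / (2 * t) * ((1 + ‖z‖ ^ 2) * gauss N z t) := by
  rw [gaussLineDeriv, norm_mul, norm_neg, norm_div, norm_of_nonneg (gauss_nonneg z ht.le),
    norm_of_nonneg (by positivity : 0 ≤ 2 * t), ← mul_assoc, div_mul_eq_mul_div ‖e‖]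
  gcongr
  · exact gauss_nonneg z ht.le
  · have := norm_inner_le_norm (𝕜 := ℝ) z e
    nlinarith [norm_nonneg e, sq_nonneg (‖z‖ - 1), norm_nonneg z]

lemma norm_gaussLineDeriv₂_le (e z : ℝ^(N)) (ht : 0 < t) :
    ‖gaussLineDeriv₂ e z t‖
      ≤ ‖e‖ ^ 2 * (1 / (4 * t ^ 2) + 1 / (2 * t)) * ((1 + ‖z‖ ^ 2) * gauss N z t) := by
  rw [gaussLineDeriv₂, norm_mul, norm_of_nonneg (gauss_nonneg z ht.le), ← mul_assoc]
  gcongr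
  · exact gauss_nonneg z ht.le
  have hinner : inner ℝ z e ^ 2 ≤ (‖z‖ * ‖e‖) ^ 2 :=
    sq_le_sq' (neg_le_of_abs_le (abs_real_inner_le_norm z e)) (real_inner_le_norm z e)
  calc ‖inner ℝ z e ^ 2 / (4 * t ^ 2) - ‖e‖ ^ 2 / (2 * t)‖
    _ ≤ inner ℝ z e ^ 2 / (4 * t ^ 2) + ‖e‖ ^ 2 / (2 * t) := by
        refine (norm_sub_le _ _).trans_eq ?_
        rw [norm_of_nonneg (by positivity), norm_of_nonneg (by positivity)]
    _ ≤ (‖z‖ * ‖e‖) ^ 2 / (4 * t ^ 2) + ‖e‖ ^ 2 / (2 * t) := by gcongr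
    _ = ‖e‖ ^ 2 * (‖z‖ ^ 2 * (1 / (4 * t ^ 2)) + 1 * (1 / (2 * t))) := by ring
    _ ≤ ‖e‖ ^ 2 * ((1 + ‖z‖ ^ 2) * (1 / (4 * t ^ 2)) + (1 + ‖z‖ ^ 2) * (1 / (2 * t))) := by
        gcongr
        · linarith
        · linarith [sq_nonneg ‖z‖]
    _ = ‖e‖ ^ 2 * (1 / (4 * t ^ 2) + 1 / (2 * t)) * (1 + ‖z‖ ^ 2) := by ring

lemma integrable_gaussLineDeriv (e : ℝ^(N)) (ht : 0 < t) : Integrable (gaussLineDeriv e · t) := by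
  obtain ⟨B, hB, hle⟩ := exists_integrable_one_add_norm_sq_mul_gauss_le N ht
  refine (hB.const_mul (‖e‖ / (2 * t))).mono' (by fun_prop) (Eventually.of_forall fun z => ?_)
  refine (norm_gaussLineDeriv_le e z ht).trans ?_
  gcongr
  simpa using hle t ⟨by linarith, by linarith⟩ z 0 (by simp)

lemma integrable_gaussLineDeriv₂ (e : ℝ^(N)) (ht : 0 < t) :
    Integrable (gaussLineDeriv₂ e · t) := by
  obtain ⟨B, hB, hle⟩ := exists_integrable_one_add_norm_sq_mul_gauss_le N ht
  refine (hB.const_mul (‖e‖ ^ 2 * (1 / (4 * t ^ 2) + 1 / (2 * t)))).mono' (by fun_prop)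
    (Eventually.of_forall fun z => ?_)
  refine (norm_gaussLineDeriv₂_le e z ht).trans ?_
  gcongr
  simpa using hle t ⟨by linarith, by linarith⟩ z 0 (by simp)

end GaussKernel

section DifferentiationUnderIntegral

lemma hasDerivAt_add_smul_of_forall_hasLineDerivAt {E : Type*} [AddCommGroup E] [Module ℝ E]
    {f f' : E → ℝ} {e : E} (hf : ∀ x, HasLineDerivAt ℝ f (f' x) x e) (x : E) (s : ℝ) :
    HasDerivAt (fun s : ℝ => f (x + s • e)) (f' (x + s • e)) s := by
  have hzero : HasDerivAt (fun r : ℝ => f (x + s • e + r • e)) (f' (x + s • e)) (s - s) := by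
    rw [sub_self]
    exact hf (x + s • e)
  refine (hzero.comp_sub_const s s).congr_of_eventuallyEq (Eventually.of_forall fun r => ?_)
  simp only [sub_smul, add_assoc, add_sub_cancel]

variable {E : Type*} [NormedAddCommGroup E] [MeasurableSpace E] [BorelSpace E]
  {μ : Measure E} [μ.IsAddLeftInvariant] [μ.IsNegInvariant] {v : E → ℝ} {M : ℝ}

lemma integrable_comp_sub_mul {φ : E → ℝ} (hφ : Integrable φ μ)
    (hv : AEStronglyMeasurable v μ) (hM : ∀ y, ‖v y‖ ≤ M) (x : E) :
    Integrable (fun y => φ (x - y) * v y) μ :=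
  (hφ.comp_sub_left x).mul_bdd hv (Eventually.of_forall hM)

lemma hasDerivAt_integral_comp_sub_mul {k k' : ℝ → E → ℝ} {s₀ : ℝ} {S : Set ℝ} {B : E → ℝ}
    (hS : S ∈ 𝓝 s₀) (hk : ∀ᶠ s in 𝓝 s₀, AEStronglyMeasurable (k s) μ)
    (hk_int : Integrable (k s₀) μ)
    (hk' : AEStronglyMeasurable (k' s₀) μ) (hB : Integrable B μ)
    (hbound : ∀ s ∈ S, ∀ z, ‖k' s z‖ ≤ B z)
    (hderiv : ∀ s ∈ S, ∀ z, HasDerivAt (k · z) (k' s z) s)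
    (hv : AEStronglyMeasurable v μ) (hM : ∀ y, ‖v y‖ ≤ M) (x : E) :
    HasDerivAt (fun s => ∫ y, k s (x - y) * v y ∂μ) (∫ y, k' s₀ (x - y) * v y ∂μ) s₀ := by
  have hsub := (Measure.measurePreserving_sub_left μ x).quasiMeasurePreserving
  refine (hasDerivAt_integral_of_dominated_loc_of_deriv_le (F := fun s y => k s (x - y) * v y)
    (F' := fun s y => k' s (x - y) * v y) (bound := fun y => B (x - y) * M)
    hS ?_ ?_ ?_ ?_ ?_ ?_).2
  · exact hk.mono fun s hs => (hs.comp_quasiMeasurePreserving hsub).mul hv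
  · exact integrable_comp_sub_mul hk_int hv hM x
  · exact (hk'.comp_quasiMeasurePreserving hsub).mul hv
  · refine Eventually.of_forall fun y s hs => ?_
    rw [norm_mul]
    exact mul_le_mul (hbound s hs _) (hM y) (norm_nonneg _) ((norm_nonneg _).trans (hbound s hs _))
  · exact (hB.comp_sub_left x).mul_const M
  · exact Eventually.of_forall fun y s hs => (hderiv s hs _).mul_const _

lemma hasLineDerivAt_integral_comp_sub_mul [NormedSpace ℝ E] [SecondCountableTopology E]
    {φ φ' B : E → ℝ} {e : E}
    (hφ : Continuous φ) (hφ_int : Integrable φ μ) (hφ' : Continuous φ') (hB : Integrable B μ)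
    (hbound : ∀ z w, ‖w‖ ≤ 1 → ‖φ' (z + w)‖ ≤ B z)
    (hderiv : ∀ z, HasLineDerivAt ℝ φ (φ' z) z e)
    (hv : AEStronglyMeasurable v μ) (hM : ∀ y, ‖v y‖ ≤ M) (x : E) :
    HasLineDerivAt ℝ (fun x => ∫ y, φ (x - y) * v y ∂μ) (∫ y, φ' (x - y) * v y ∂μ) x e := by
  have hS : {s : ℝ | ‖s • e‖ < 1} ∈ 𝓝 0 :=
    (isOpen_lt (by fun_prop) continuous_const).mem_nhds (by simp)
  have hderiv_int := hasDerivAt_integral_comp_sub_mul (μ := μ) (k := fun s z => φ (z + s • e))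
    (k' := fun s z => φ' (z + s • e)) hS
    (Eventually.of_forall fun s => by fun_prop) (by simpa using hφ_int) (by fun_prop) hB
    (fun s hs z => hbound z _ (le_of_lt hs))
    (fun s _ z => hasDerivAt_add_smul_of_forall_hasLineDerivAt hderiv z s) hv hM x
  simpa only [HasLineDerivAt, sub_add_eq_add_sub, zero_smul, add_zero] using hderiv_int

end DifferentiationUnderIntegral

section HeatEquation

variable {N : ℕ} {t : ℝ} {v : ℝ^(N) → ℝ} {M : ℝ}

/-- The derivative of `heatSol N v t` at `x` in the direction `e`. -/
noncomputable def heatLineDeriv (e : ℝ^(N)) (v : ℝ^(N) → ℝ) (t : ℝ) (x : ℝ^(N)) : ℝ :=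
  ∫ y, gaussLineDeriv e (x - y) t * v y

/-- The second derivative of `heatSol N v t` at `x` in the direction `e`. -/
noncomputable def heatLineDeriv₂ (e : ℝ^(N)) (v : ℝ^(N) → ℝ) (t : ℝ) (x : ℝ^(N)) : ℝ :=
  ∫ y, gaussLineDeriv₂ e (x - y) t * v y

lemma hasLineDerivAt_heatSol (hv : AEStronglyMeasurable v) (hM : ∀ y, ‖v y‖ ≤ M) (ht : 0 < t)
    (e x : ℝ^(N)) : HasLineDerivAt ℝ (heatSol N v t) (heatLineDeriv e v t x) x e := by
  obtain ⟨B, hB, hle⟩ := exists_integrable_one_add_norm_sq_mul_gauss_le N ht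
  refine hasLineDerivAt_integral_comp_sub_mul (by fun_prop) (integrable_gauss N ht) (by fun_prop)
    (hB.const_mul (‖e‖ / (2 * t))) (fun z w hw => ?_) (hasLineDerivAt_gauss e · t) hv hM x
  refine (norm_gaussLineDeriv_le e (z + w) ht).trans ?_
  gcongr
  exact hle t ⟨by linarith, by linarith⟩ z w hw

lemma hasLineDerivAt_heatLineDeriv (hv : AEStronglyMeasurable v) (hM : ∀ y, ‖v y‖ ≤ M)
    (ht : 0 < t) (e x : ℝ^(N)) :
    HasLineDerivAt ℝ (heatLineDeriv e v t) (heatLineDeriv₂ e v t x) x e := by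
  obtain ⟨B, hB, hle⟩ := exists_integrable_one_add_norm_sq_mul_gauss_le N ht
  refine hasLineDerivAt_integral_comp_sub_mul (by fun_prop) (integrable_gaussLineDeriv e ht)
    (by fun_prop) (hB.const_mul (‖e‖ ^ 2 * (1 / (4 * t ^ 2) + 1 / (2 * t))))
    (fun z w hw => ?_) (hasLineDerivAt_gaussLineDeriv e · t) hv hM x
  refine (norm_gaussLineDeriv₂_le e (z + w) ht).trans ?_
  gcongr
  exact hle t ⟨by linarith, by linarith⟩ z w hw

lemma hasDerivAt_heatSol_time {ι : Type*} [Fintype ι] (b : OrthonormalBasis ι ℝ ℝ^(N))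
    (hv : AEStronglyMeasurable v) (hM : ∀ y, ‖v y‖ ≤ M) (ht : 0 < t) (x : ℝ^(N)) :
    HasDerivAt (fun s => heatSol N v s x) (∑ i, heatLineDeriv₂ (b i) v t x) t := by
  obtain ⟨B, hB, hle⟩ := exists_integrable_one_add_norm_sq_mul_gauss_le N ht
  have hsum : ∑ i, heatLineDeriv₂ (b i) v t x
      = ∫ y, (∑ i, gaussLineDeriv₂ (b i) (x - y) t) * v y := by
    simp only [heatLineDeriv₂, Finset.sum_mul]
    exact (integral_finsetSum _ fun i _ =>
      integrable_comp_sub_mul (integrable_gaussLineDeriv₂ (b i) ht) hv hM x).symm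
  rw [hsum]
  have s_pos {s : ℝ} (hs : s ∈ Ioo (t / 2) (2 * t)) : 0 < s := (half_pos ht).trans hs.1
  refine hasDerivAt_integral_comp_sub_mul (k := fun s z => gauss N z s)
    (k' := fun s z => ∑ i, gaussLineDeriv₂ (b i) z s)
    (Ioo_mem_nhds (half_lt_self ht) (by linarith))
    (Eventually.of_forall fun s => by fun_prop) (integrable_gauss N ht)
    (by fun_prop) (hB.const_mul (∑ _ : ι, (1 / (4 * (t / 2) ^ 2) + 1 / (2 * (t / 2)))))
    (fun s hs z => ?_) (fun s hs z => hasDerivAt_gauss_time b z (s_pos hs)) hv hM x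
  rw [Finset.sum_mul]
  refine norm_sum_le_of_le _ fun i _ => (norm_gaussLineDeriv₂_le (b i) z (s_pos hs)).trans ?_
  rw [b.norm_eq_one, one_pow, one_mul]
  have := gauss_nonneg z (s_pos hs).le
  gcongr
  · exact hs.1.le
  · exact hs.1.le
  · simpa using hle s hs z 0 (by simp)

end HeatEquation

section HeatFlow

variable {N : ℕ} {t : ℝ} {v : ℝ^(N) → ℝ} {M : ℝ}

/-- The heat flow in the form `∫ G(ξ, 1) v(x - √t ξ) dξ`. It agrees with `heatSol` for `t > 0` but,
unlike `heatSol`, takes the correct initial value `v` at `t = 0`. -/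
noncomputable def heatFlow (v : ℝ^(N) → ℝ) (t : ℝ) (x : ℝ^(N)) : ℝ :=
  ∫ ξ, gauss N ξ 1 * v (x - √t • ξ)

@[simp]
lemma heatFlow_zero (v : ℝ^(N) → ℝ) : heatFlow v 0 = v := by
  ext x
  simp [heatFlow, integral_mul_const, integral_gauss N one_pos]

lemma heatFlow_eq_heatSol (v : ℝ^(N) → ℝ) (ht : 0 < t) : heatFlow v t = heatSol N v t := by
  ext x
  have hpow : 0 < √t ^ N := by positivity
  have hscale := Measure.integral_comp_smul (volume : Measure ℝ^(N))
    (fun z => gauss N z t * v (x - z)) (√t)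
  rw [finrank_euclideanSpace_fin, smul_eq_mul, abs_of_pos (by positivity)] at hscale
  calc heatFlow v t x
    _ = √t ^ N * ∫ ξ, gauss N (√t • ξ) t * v (x - √t • ξ) := by
        rw [heatFlow, ← integral_const_mul]
        congr with ξ
        rw [gauss_sqrt_smul ξ ht]
        field_simp
    _ = ∫ z, gauss N z t * v (x - z) := by rw [hscale, mul_inv_cancel_left₀ hpow.ne']
    _ = heatSol N v t x := by
        rw [heatSol, ← integral_sub_left_eq_self (fun y => gauss N (x - y) t * v y) volume x]
        simp only [sub_sub_cancel]

lemma heatFlow_nonneg (hv : ∀ y, 0 ≤ v y) (t : ℝ) (x : ℝ^(N)) : 0 ≤ heatFlow v t x :=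
  integral_nonneg fun ξ => mul_nonneg (gauss_nonneg ξ zero_le_one) (hv _)

lemma heatFlow_le (hv : ∀ y, 0 ≤ v y) (hM : ∀ y, v y ≤ M) (t : ℝ) (x : ℝ^(N)) :
    heatFlow v t x ≤ M := by
  calc heatFlow v t x
    _ ≤ ∫ ξ, gauss N ξ 1 * M := by
        refine integral_mono_of_nonneg
          (Eventually.of_forall fun ξ => mul_nonneg (gauss_nonneg ξ zero_le_one) (hv _))
          ((integrable_gauss N one_pos).mul_const M) (Eventually.of_forall fun ξ => ?_)
        exact mul_le_mul_of_nonneg_left (hM _) (gauss_nonneg ξ zero_le_one)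
    _ = M := by rw [integral_mul_const, integral_gauss N one_pos, one_mul]

lemma heatFlow_pos (hv : Continuous v) (hpos : ∀ y, 0 < v y) (hM : ∀ y, v y ≤ M) (t : ℝ)
    (x : ℝ^(N)) : 0 < heatFlow v t x := by
  have hpos' : ∀ ξ, 0 < gauss N ξ 1 * v (x - √t • ξ) := fun ξ =>
    mul_pos (gauss_pos ξ one_pos) (hpos _)
  have hint : Integrable fun ξ => gauss N ξ 1 * v (x - √t • ξ) := by
    refine (integrable_gauss N one_pos).mul_bdd (c := M)
      (Continuous.aestronglyMeasurable (by fun_prop)) (Eventually.of_forall fun ξ => ?_)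
    rw [norm_of_nonneg (hpos _).le]
    exact hM _
  refine (integral_pos_iff_support_of_nonneg (fun ξ => (hpos' ξ).le) hint).2 ?_
  rw [Function.support_eq_univ (fun ξ => (hpos' ξ).ne')]
  exact isOpen_univ.measure_pos _ univ_nonempty

lemma tendsto_heatFlow {ι : Type*} {l : Filter ι} [l.IsCountablyGenerated] (hv : Continuous v)
    (hM : ∀ y, ‖v y‖ ≤ M) {t : ι → ℝ} {x : ι → ℝ^(N)} {F : ℝ^(N) → ℝ}
    (hlim : ∀ ξ, Tendsto (fun i => v (x i - √(t i) • ξ)) l (𝓝 (F ξ))) :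
    Tendsto (fun i => heatFlow v (t i) (x i)) l (𝓝 (∫ ξ, gauss N ξ 1 * F ξ)) := by
  refine tendsto_integral_filter_of_dominated_convergence (fun ξ => gauss N ξ 1 * M)
    (Eventually.of_forall fun i => Continuous.aestronglyMeasurable (by fun_prop))
    (Eventually.of_forall fun i => Eventually.of_forall fun ξ => ?_)
    ((integrable_gauss N one_pos).mul_const M)
    (Eventually.of_forall fun ξ => (hlim ξ).const_mul _)
  rw [norm_mul, norm_of_nonneg (gauss_nonneg ξ zero_le_one)]
  exact mul_le_mul_of_nonneg_left (hM _) (gauss_nonneg ξ zero_le_one)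

lemma continuous_heatFlow (hv : Continuous v) (hM : ∀ y, ‖v y‖ ≤ M) :
    Continuous fun z : ℝ × ℝ^(N) => heatFlow v z.1 z.2 :=
  continuous_iff_continuousAt.2 fun _ =>
    tendsto_heatFlow hv hM fun _ => Continuous.tendsto (by fun_prop) _

lemma tendsto_sub_sqrt_smul_cocompact (T : ℝ) (ξ : ℝ^(N)) :
    Tendsto (fun z : ℝ × ℝ^(N) => z.2 - √z.1 • ξ) (𝓟 (Icc 0 T) ×ˢ cocompact ℝ^(N))
      (cocompact ℝ^(N)) := by
  rw [← Metric.cobounded_eq_cocompact, ← tendsto_norm_atTop_iff_cobounded]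
  have hnorm : Tendsto (fun z : ℝ × ℝ^(N) => ‖z.2‖ - √T * ‖ξ‖)
      (𝓟 (Icc 0 T) ×ˢ Bornology.cobounded ℝ^(N)) atTop :=
    tendsto_atTop_add_const_right _ _ (tendsto_norm_cobounded_atTop.comp tendsto_snd)
  refine tendsto_atTop_mono' _ ?_ hnorm
  filter_upwards [tendsto_fst.eventually (mem_principal_self (Icc 0 T))] with z hz
  calc ‖z.2‖ - √T * ‖ξ‖
    _ ≤ ‖z.2‖ - ‖√z.1 • ξ‖ := by
        rw [norm_smul, norm_of_nonneg (sqrt_nonneg _)]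
        gcongr
        exact hz.2
    _ ≤ ‖z.2 - √z.1 • ξ‖ := norm_sub_norm_le _ _

lemma exists_isCompact_heatFlow_lt (v : C₀(ℝ^(N), ℝ)) (T : ℝ) {ε : ℝ} (hε : 0 < ε) :
    ∃ K : Set ℝ^(N), IsCompact K ∧ ∀ t ∈ Icc 0 T, ∀ x ∉ K, heatFlow v t x < ε := by
  have : (cocompact ℝ^(N)).IsCountablyGenerated := by
    rw [← Metric.cobounded_eq_cocompact, ← comap_norm_atTop]
    infer_instance
  have hlim := tendsto_heatFlow (map_continuous v) v.toBCF.norm_coe_le_norm fun ξ =>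
    (zero_at_infty v).comp (tendsto_sub_sqrt_smul_cocompact T ξ)
  simp only [mul_zero, integral_zero] at hlim
  obtain ⟨I, hI, J, hJ, h⟩ := mem_prod_iff.1 (hlim.eventually (gt_mem_nhds hε))
  obtain ⟨K, hK, hKJ⟩ := mem_cocompact.1 hJ
  exact ⟨K, hK, fun t ht x hx => h (mk_mem_prod (hI ht) (hKJ hx))⟩

lemma hasDerivAt_heatFlow_time {ι : Type*} [Fintype ι] (b : OrthonormalBasis ι ℝ ℝ^(N))
    (hv : AEStronglyMeasurable v) (hM : ∀ y, ‖v y‖ ≤ M) (ht : 0 < t) (x : ℝ^(N)) :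
    HasDerivAt (heatFlow v · x) (∑ i, heatLineDeriv₂ (b i) v t x) t := by
  refine (hasDerivAt_heatSol_time b hv hM ht x).congr_of_eventuallyEq ?_
  filter_upwards [lt_mem_nhds ht] with s hs
  rw [heatFlow_eq_heatSol v hs]

lemma tendsto_heatSol {ι : Type*} {l : Filter ι} [l.IsCountablyGenerated] {v : ι → ℝ^(N) → ℝ}
    {u : ℝ^(N) → ℝ} (hv : ∀ᶠ i in l, AEStronglyMeasurable (v i)) (hM : ∀ᶠ i in l, ∀ y, ‖v i y‖ ≤ M)
    (hlim : ∀ᵐ y, Tendsto (fun i => v i y) l (𝓝 (u y))) (ht : 0 < t) (x : ℝ^(N)) :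
    Tendsto (fun i => heatSol N (v i) t x) l (𝓝 (heatSol N u t x)) := by
  refine tendsto_integral_filter_of_dominated_convergence (fun y => gauss N (x - y) t * M)
    ?_ ?_ (((integrable_gauss N ht).comp_sub_left x).mul_const M) ?_
  · filter_upwards [hv] with i hvi
    exact (Continuous.aestronglyMeasurable (by fun_prop)).mul hvi
  · filter_upwards [hM] with i hMi
    refine Eventually.of_forall fun y => ?_
    rw [norm_mul, norm_of_nonneg (gauss_nonneg _ ht.le)]
    exact mul_le_mul_of_nonneg_left (hMi y) (gauss_nonneg _ ht.le)
  · filter_upwards [hlim] with y hy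
    exact hy.const_mul _

end HeatFlow

section TwoPointComparison

/-- The two-point function of the comparison argument: it is nonnegative for all `δ > 0` exactly
when `U x ^ p * U y ^ q ≤ U (a • x + b • y)` for positive `U`. The regularisation `δ > 0` makes it
positive near infinity when `U` vanishes there. -/
noncomputable def twoPointGap {E : Type*} [AddCommGroup E] [Module ℝ E] (a b p q δ : ℝ)
    (U : E → ℝ) (z : E × E) : ℝ :=
  log (U (a • z.1 + b • z.2) + δ) - p * log (U z.1) - q * log (U z.2)

lemma rpow_mul_rpow_le_iff_log_le {p q X Y Z : ℝ} (hX : 0 < X) (hY : 0 < Y) (hZ : 0 < Z) :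
    X ^ p * Y ^ q ≤ Z ↔ p * log X + q * log Y ≤ log Z := by
  rw [← log_le_log_iff (by positivity) hZ, log_mul (by positivity) (by positivity),
    log_rpow hX, log_rpow hY]

lemma exists_pos_forall_lt_mul_log_add_mul_log_le {p q : ℝ} (hp : 0 < p) (hq : 0 ≤ q) (M c : ℝ) :
    ∃ η > 0, ∀ X Y : ℝ, 0 < X → X < η → 0 < Y → Y ≤ M → p * log X + q * log Y ≤ c := by
  have hlim : Tendsto (fun X => p * log X) (𝓝[>] 0) atBot :=
    tendsto_log_nhdsGT_zero.const_mul_atBot hp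
  obtain ⟨η, hη, h⟩ := mem_nhdsGT_iff_exists_Ioo_subset.1
    (hlim.eventually (eventually_le_atBot (c - q * log M)))
  refine ⟨η, hη, fun X Y hX hXη hY hYM => ?_⟩
  have hXc : p * log X ≤ c - q * log M := h ⟨hX, hXη⟩
  have hYM' : q * log Y ≤ q * log M := by gcongr
  linarith

variable {a b p q δ : ℝ}

lemma second_lineDeriv_div_le_of_twoPointGap_min {E : Type*} [AddCommGroup E] [Module ℝ E]
    {U U' U'' : E → ℝ} {e : E} (hab : a + b = 1) (hp : 0 < p) (hq : 0 < q)
    (hpq : a ^ 2 / p + b ^ 2 / q ≤ 1) (hδ : 0 ≤ δ) (hU : ∀ x, 0 < U x)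
    (hU' : ∀ x, HasLineDerivAt ℝ U (U' x) x e) (hU'' : ∀ x, HasLineDerivAt ℝ U' (U'' x) x e)
    (z : E × E) (hmin : ∀ z', twoPointGap a b p q δ U z ≤ twoPointGap a b p q δ U z') :
    p * (U'' z.1 / U z.1) + q * (U'' z.2 / U z.2)
      ≤ U'' (a • z.1 + b • z.2) / (U (a • z.1 + b • z.2) + δ) := by
  have hderiv := hasDerivAt_add_smul_of_forall_hasLineDerivAt hU'
  have := sum_second_deriv_div_le_of_two_point_min hab hp hq hpq
    (fun s => hU (z.1 + s • e)) (fun s => hU (z.2 + s • e))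
    (fun s => add_pos_of_pos_of_nonneg (hU (a • z.1 + b • z.2 + s • e)) hδ)
    (hderiv z.1) (hU'' z.1) (hderiv z.2) (hU'' z.2)
    (fun s => (hderiv (a • z.1 + b • z.2) s).add_const δ) (hU'' (a • z.1 + b • z.2))
    fun σ τ => ?_
  · simpa only [zero_smul, add_zero] using this
  · have hsum : a • (z.1 + σ • e) + b • (z.2 + τ • e)
        = a • z.1 + b • z.2 + (a * σ + b * τ) • e := by module
    simpa only [twoPointGap, hsum, zero_smul, add_zero] using hmin (z.1 + σ • e, z.2 + τ • e)

variable {N : ℕ} {t : ℝ} {v : C₀(ℝ^(N), ℝ)}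

lemma heatFlow_pos_of_pos (hpos : ∀ y, 0 < v y) (t : ℝ) (x : ℝ^(N)) : 0 < heatFlow v t x :=
  heatFlow_pos (map_continuous v) hpos
    (fun y => (le_norm_self _).trans (v.toBCF.norm_coe_le_norm y)) t x

lemma continuous_twoPointGap_heatFlow (hpos : ∀ y, 0 < v y) (hδ : 0 ≤ δ) :
    Continuous fun z : ℝ × ℝ^(N) × ℝ^(N) => twoPointGap a b p q δ (heatFlow v z.1) z.2 := by
  have hU {f : ℝ × ℝ^(N) × ℝ^(N) → ℝ^(N)} (hf : Continuous f) :
      Continuous fun z => heatFlow v z.1 (f z) :=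
    (continuous_heatFlow (map_continuous v) v.toBCF.norm_coe_le_norm).comp
      (continuous_fst.prodMk hf)
  have hlog := fun t x => (heatFlow_pos_of_pos hpos t x).ne'
  refine Continuous.sub (Continuous.sub ?_ ?_) ?_
  · exact ((hU (by fun_prop)).add_const δ).log fun z =>
      (add_pos_of_pos_of_nonneg (heatFlow_pos_of_pos hpos _ _) hδ).ne'
  · exact ((hU (by fun_prop)).log fun z => hlog _ _).const_mul p
  · exact ((hU (by fun_prop)).log fun z => hlog _ _).const_mul q

lemma exists_isCompact_twoPointGap_heatFlow_nonneg (hpos : ∀ y, 0 < v y) (hp : 0 < p)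
    (hq : 0 < q) (hδ : 0 < δ) (T : ℝ) :
    ∃ K : Set (ℝ^(N) × ℝ^(N)), IsCompact K ∧
      ∀ t ∈ Icc 0 T, ∀ z ∉ K, 0 ≤ twoPointGap a b p q δ (heatFlow v t) z := by
  have hU := heatFlow_pos_of_pos hpos
  have hUM : ∀ t x, heatFlow v t x ≤ ‖v.toBCF‖ :=
    heatFlow_le (fun y => (hpos y).le) fun y => (le_norm_self _).trans (v.toBCF.norm_coe_le_norm y)
  obtain ⟨η₁, hη₁, h₁⟩ :=
    exists_pos_forall_lt_mul_log_add_mul_log_le hp hq.le ‖v.toBCF‖ (log δ)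
  obtain ⟨η₂, hη₂, h₂⟩ :=
    exists_pos_forall_lt_mul_log_add_mul_log_le hq hp.le ‖v.toBCF‖ (log δ)
  obtain ⟨K₁, hK₁, hlt₁⟩ := exists_isCompact_heatFlow_lt v T hη₁
  obtain ⟨K₂, hK₂, hlt₂⟩ := exists_isCompact_heatFlow_lt v T hη₂
  refine ⟨K₁ ×ˢ K₂, hK₁.prod hK₂, fun t ht z hz => ?_⟩
  have hδ_le : log δ ≤ log (heatFlow v t (a • z.1 + b • z.2) + δ) :=
    log_le_log hδ (le_add_of_nonneg_left (hU _ _).le)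
  rw [twoPointGap]
  rcases not_and_or.1 hz with hz | hz
  · linarith [h₁ _ _ (hU t z.1) (hlt₁ t ht _ hz) (hU t z.2) (hUM t z.2)]
  · linarith [h₂ _ _ (hU t z.2) (hlt₂ t ht _ hz) (hU t z.1) (hUM t z.1)]

lemma exists_nonneg_hasDerivAt_twoPointGap_heatFlow_of_forall_le (hpos : ∀ y, 0 < v y)
    (hab : a + b = 1) (hp : 0 < p) (hq : 0 < q) (hpq : a ^ 2 / p + b ^ 2 / q ≤ 1) (hδ : 0 ≤ δ)
    (ht : 0 < t) (z : ℝ^(N) × ℝ^(N))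
    (hmin : ∀ z', twoPointGap a b p q δ (heatFlow v t) z
      ≤ twoPointGap a b p q δ (heatFlow v t) z') :
    ∃ d ≥ 0, HasDerivAt (fun s => twoPointGap a b p q δ (heatFlow v s) z) d t := by
  have hv : AEStronglyMeasurable v := (map_continuous v).aestronglyMeasurable
  have hM := v.toBCF.norm_coe_le_norm
  have hU := heatFlow_pos_of_pos hpos t
  let e := EuclideanSpace.basisFun (Fin N) ℝ
  have htime (x : ℝ^(N)) := hasDerivAt_heatFlow_time e hv hM ht x
  refine ⟨_, ?_, ((((htime (a • z.1 + b • z.2)).add_const δ).log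
    (add_pos_of_pos_of_nonneg (hU _) hδ).ne').sub (((htime z.1).log (hU _).ne').const_mul p)).sub
    (((htime z.2).log (hU _).ne').const_mul q)⟩
  rw [ge_iff_le, sub_sub, sub_nonneg]
  simp only [Finset.sum_div, Finset.mul_sum, ← Finset.sum_add_distrib]
  refine Finset.sum_le_sum fun i _ => ?_
  refine second_lineDeriv_div_le_of_twoPointGap_min (U' := heatLineDeriv (e i) v t) hab hp hq hpq
    hδ hU (fun x => ?_) (hasLineDerivAt_heatLineDeriv hv hM ht (e i)) z hmin
  rw [heatFlow_eq_heatSol _ ht]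
  exact hasLineDerivAt_heatSol hv hM ht (e i) x

lemma twoPointGap_heatFlow_nonneg (hpos : ∀ y, 0 < v y) (hab : a + b = 1) (hp : 0 < p)
    (hq : 0 < q) (hpq : a ^ 2 / p + b ^ 2 / q ≤ 1) (hδ : 0 < δ)
    (hinit : ∀ z, 0 ≤ twoPointGap a b p q δ v z) (ht : 0 ≤ t) (z : ℝ^(N) × ℝ^(N)) :
    0 ≤ twoPointGap a b p q δ (heatFlow v t) z := by
  obtain ⟨K, hK, hout⟩ := exists_isCompact_twoPointGap_heatFlow_nonneg hpos hp hq hδ t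
  exact parabolic_minimum_principle (Φ := fun s => twoPointGap a b p q δ (heatFlow v s)) hK
    (continuous_twoPointGap_heatFlow hpos hδ.le).continuousOn
    (by simpa only [heatFlow_zero] using hinit) hout
    (fun s hs => exists_nonneg_hasDerivAt_twoPointGap_heatFlow_of_forall_le hpos hab hp hq hpq
      hδ.le hs.1) (right_mem_Icc.2 ht) z

lemma heatSol_rpow_mul_rpow_le (hpos : ∀ y, 0 < v y) (hab : a + b = 1) (hp : 0 < p)
    (hq : 0 < q) (hpq : a ^ 2 / p + b ^ 2 / q ≤ 1)
    (hinit : ∀ x y, v x ^ p * v y ^ q ≤ v (a • x + b • y)) (ht : 0 < t) (x y : ℝ^(N)) :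
    heatSol N v t x ^ p * heatSol N v t y ^ q ≤ heatSol N v t (a • x + b • y) := by
  have hU := heatFlow_pos_of_pos hpos t
  rw [← heatFlow_eq_heatSol _ ht]
  have hδ : ∀ δ > 0, heatFlow v t x ^ p * heatFlow v t y ^ q
      ≤ heatFlow v t (a • x + b • y) + δ := fun δ hδ => by
    rw [rpow_mul_rpow_le_iff_log_le (hU x) (hU y) (add_pos (hU _) hδ)]
    have := twoPointGap_heatFlow_nonneg hpos hab hp hq hpq hδ (fun z => ?_) ht.le (x, y)
    · rw [twoPointGap] at this
      linarith
    · have := (rpow_mul_rpow_le_iff_log_le (hpos z.1) (hpos z.2) (add_pos (hpos _) hδ)).1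
        ((hinit z.1 z.2).trans (le_add_of_nonneg_right hδ.le))
      rw [twoPointGap]
      linarith
  exact le_of_forall_pos_le_add hδ

end TwoPointComparison

section Approximation

lemma exp_neg_rpow_mul_rpow_le {E : Type*} [AddCommGroup E] [Module ℝ E] {α a b l m : ℝ}
    {g : E → ℝ} (hα : 1 ≤ α) (ha : 0 ≤ a) (hb : 0 ≤ b) (hab : a + b = 1) (hl : 0 < l) (hm : 0 < m)
    (hlm : a * l + b * m = 1) (hg : ConvexOn ℝ univ g) (hg₀ : ∀ x, 0 ≤ g x) (x y : E) :
    exp (-g x ^ α) ^ (a * l ^ (1 - α)) * exp (-g y ^ α) ^ (b * m ^ (1 - α))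
      ≤ exp (-g (a • x + b • y) ^ α) := by
  rw [← exp_mul, ← exp_mul, ← exp_add, exp_le_exp]
  have hconv : g (a • x + b • y) ^ α ≤ (a * g x + b * g y) ^ α :=
    rpow_le_rpow (hg₀ _) (hg.2 trivial trivial ha hb hab) (by linarith)
  linarith [rpow_add_le_weighted_rpow_add hα ha hb hl hm hlm (hg₀ x) (hg₀ y)]

lemma continuous_rpow_of_convexOn {E : Type*} [NormedAddCommGroup E] [NormedSpace ℝ E]
    [FiniteDimensional ℝ E] {α : ℝ} {g : E → ℝ} (hg : ConvexOn ℝ univ g) (hα : 0 ≤ α) :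
    Continuous fun x => g x ^ α :=
  (continuousOn_univ.1 (hg.continuousOn isOpen_univ)).rpow_const fun _ => Or.inr hα

lemma tendsto_exp_neg_rpow_atTop {α : ℝ} (hα : 0 < α) :
    Tendsto (fun r : ℝ => exp (-r ^ α)) atTop (𝓝 0) :=
  tendsto_exp_neg_atTop_nhds_zero.comp (tendsto_rpow_atTop hα)

lemma heatSol_exp_neg_rpow_mul_rpow_le {N : ℕ} {α a b l m t : ℝ} {g : ℝ^(N) → ℝ} (hα₁ : 1 ≤ α)
    (hα₂ : α ≤ 2) (hg : ConvexOn ℝ univ g) (hg₀ : ∀ x, 0 ≤ g x)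
    (hg_lim : Tendsto g (cocompact ℝ^(N)) atTop) (ha : 0 < a) (hb : 0 < b) (hab : a + b = 1)
    (hl : 0 < l) (hm : 0 < m) (hlm : a * l + b * m = 1) (ht : 0 < t) (x y : ℝ^(N)) :
    heatSol N (fun x => exp (-g x ^ α)) t x ^ (a * l ^ (1 - α))
        * heatSol N (fun x => exp (-g x ^ α)) t y ^ (b * m ^ (1 - α))
      ≤ heatSol N (fun x => exp (-g x ^ α)) t (a • x + b • y) := by
  have hα : 0 < α := by linarith
  let v : C₀(ℝ^(N), ℝ) :=
    { toFun := fun x => exp (-g x ^ α)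
      continuous_toFun := (continuous_rpow_of_convexOn hg hα.le).neg.rexp
      zero_at_infty' := (tendsto_exp_neg_rpow_atTop hα).comp hg_lim }
  exact heatSol_rpow_mul_rpow_le (v := v) (fun _ => exp_pos _) hab (by positivity) (by positivity)
    (sq_div_weight_add_sq_div_weight_le_one hα₁ hα₂ ha.le hb.le hab hl hm hlm)
    (exp_neg_rpow_mul_rpow_le hα₁ ha.le hb.le hab hl hm hlm hg hg₀) ht x y

variable {N : ℕ} {α k : ℝ} {D : Set ℝ^(N)} {w : ℝ^(N) → ℝ}

/-- The exponent `w_k + |x| / k`, with `w_k` the Lipschitz envelope of `w`: a finite, continuous,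
convex and coercive approximation of the function equal to `w` on `D` and to `+∞` elsewhere. -/
noncomputable def coerciveEnvelope (D : Set ℝ^(N)) (w : ℝ^(N) → ℝ) (k : ℝ) (x : ℝ^(N)) : ℝ :=
  lipschitzEnvelope D w k x + ‖x‖ / k

lemma coerciveEnvelope_nonneg (hw : ∀ y ∈ D, 0 ≤ w y) (hk : 0 ≤ k) (x : ℝ^(N)) :
    0 ≤ coerciveEnvelope D w k x :=
  add_nonneg (lipschitzEnvelope_nonneg hw hk x) (by positivity)

lemma convexOn_coerciveEnvelope (hD : D.Nonempty) (hw : ∀ y ∈ D, 0 ≤ w y) (hk : 0 ≤ k)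
    (hconv : ConvexOn ℝ D w) : ConvexOn ℝ univ (coerciveEnvelope D w k) := by
  refine (convexOn_lipschitzEnvelope hD hw hk hconv).add ?_
  simp only [div_eq_inv_mul]
  exact convexOn_univ_norm.smul (inv_nonneg.2 hk)

lemma tendsto_coerciveEnvelope_cocompact (hw : ∀ y ∈ D, 0 ≤ w y) (hk : 0 < k) :
    Tendsto (coerciveEnvelope D w k) (cocompact ℝ^(N)) atTop :=
  tendsto_atTop_mono (fun x => le_add_of_nonneg_left (lipschitzEnvelope_nonneg hw hk.le x))
    (tendsto_norm_cocompact_atTop.atTop_div_const hk)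

lemma tendsto_exp_neg_coerciveEnvelope_rpow (hα : 0 < α) (hD : D.Nonempty)
    (hw : ∀ y ∈ D, 0 ≤ w y) (hconv : ConvexOn ℝ D w) {x : ℝ^(N)} (hx : x ∉ frontier D) :
    Tendsto (fun k => exp (-coerciveEnvelope D w k x ^ α)) atTop
      (𝓝 (D.indicator (fun x => exp (-w x ^ α)) x)) := by
  have hnorm : Tendsto (fun k => ‖x‖ / k) atTop (𝓝 0) := tendsto_id.const_div_atTop ‖x‖
  by_cases hxD : x ∈ closure D
  · have hx_int : x ∈ interior D := by_contra fun h => hx ⟨hxD, h⟩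
    have hcont : ContinuousAt w x :=
      hconv.continuousOn_interior.continuousAt (isOpen_interior.mem_nhds hx_int)
    have hlim := (tendsto_lipschitzEnvelope_of_mem hw (interior_subset hx_int)
      hcont.continuousWithinAt).add hnorm
    rw [add_zero] at hlim
    rw [indicator_of_mem (interior_subset hx_int)]
    exact (hlim.rpow_const (Or.inr hα.le)).neg.rexp
  · rw [indicator_of_notMem fun h => hxD (subset_closure h)]
    exact (tendsto_exp_neg_rpow_atTop hα).comp
      ((tendsto_lipschitzEnvelope_of_notMem_closure hD hw hxD).atTop_add hnorm)

lemma heatSol_indicator_exp_neg_rpow_mul_rpow_le (hα₁ : 1 ≤ α) (hα₂ : α ≤ 2)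
    (hD : D.Nonempty) (hw : ∀ y ∈ D, 0 ≤ w y) (hconv : ConvexOn ℝ D w) {a b l m t : ℝ}
    (ha : 0 < a) (hb : 0 < b) (hab : a + b = 1) (hl : 0 < l) (hm : 0 < m)
    (hlm : a * l + b * m = 1) (ht : 0 < t) (x y : ℝ^(N)) :
    heatSol N (D.indicator fun x => exp (-w x ^ α)) t x ^ (a * l ^ (1 - α))
        * heatSol N (D.indicator fun x => exp (-w x ^ α)) t y ^ (b * m ^ (1 - α))
      ≤ heatSol N (D.indicator fun x => exp (-w x ^ α)) t (a • x + b • y) := by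
  have hα : 0 < α := by linarith
  have hlim := tendsto_heatSol (l := atTop)
    (v := fun k x => exp (-coerciveEnvelope D w k x ^ α)) (M := 1)
    (u := D.indicator fun x => exp (-w x ^ α)) ?_ ?_ ?_ ht
  · refine le_of_tendsto_of_tendsto (((hlim x).rpow_const (Or.inr ?_)).mul
      ((hlim y).rpow_const (Or.inr ?_))) (hlim (a • x + b • y)) ?_
    · positivity
    · positivity
    · filter_upwards [eventually_gt_atTop 0] with k hk
      exact heatSol_exp_neg_rpow_mul_rpow_le hα₁ hα₂ (convexOn_coerciveEnvelope hD hw hk.le hconv)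
        (coerciveEnvelope_nonneg hw hk.le) (tendsto_coerciveEnvelope_cocompact hw hk) ha hb hab
        hl hm hlm ht x y
  · filter_upwards [eventually_ge_atTop 0] with k hk
    exact (continuous_rpow_of_convexOn (convexOn_coerciveEnvelope hD hw hk hconv)
      hα.le).neg.rexp.aestronglyMeasurable
  · filter_upwards [eventually_ge_atTop 0] with k hk y
    rw [norm_of_nonneg (exp_pos _).le, exp_le_one_iff, neg_nonpos]
    exact rpow_nonneg (coerciveEnvelope_nonneg hw hk y) α
  · filter_upwards [measure_eq_zero_iff_ae_notMem.1 (hconv.1.addHaar_frontier volume)] with y hy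
    exact tendsto_exp_neg_coerciveEnvelope_rpow hα hD hw hconv hy

end Approximation

section ConcavityOfLfun

variable {α : ℝ}

lemma mul_Lfun_add_mul_Lfun_le_iff (a b : ℝ) {r s c : ℝ} (hr : 0 < r) (hs : 0 < s) :
    (a : EReal) * Lfun α r + (b : EReal) * Lfun α s ≤ Lfun α c ↔
      0 < c ∧ (-log c) ^ (1 / α) ≤ a * (-log r) ^ (1 / α) + b * (-log s) ^ (1 / α) := by
  simp only [Lfun, if_pos hr, if_pos hs]
  split_ifs with hc
  · norm_cast
    constructor
    · exact fun h => ⟨hc, by linarith⟩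
    · exact fun h => by linarith [h.2]
  · exact iff_of_false (fun h => EReal.coe_ne_bot _ (le_bot_iff.1 (mod_cast h))) fun h => hc h.1

lemma eRealConcaveOn_Lfun_iff_convexOn {E : Type*} [AddCommGroup E] [Module ℝ E] {u : E → ℝ} :
    ERealConcaveOn (fun x => Lfun α (u x)) ↔
      ConvexOn ℝ {x | 0 < u x} fun x => (-log (u x)) ^ (1 / α) := by
  constructor
  · intro h
    have key {x y : E} (hx : 0 < u x) (hy : 0 < u y) {a b : ℝ} (ha : 0 ≤ a) (hb : 0 ≤ b)
        (hab : a + b = 1) : 0 < u (a • x + b • y) ∧ (-log (u (a • x + b • y))) ^ (1 / α)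
          ≤ a * (-log (u x)) ^ (1 / α) + b * (-log (u y)) ^ (1 / α) := by
      obtain rfl : a = 1 - b := eq_sub_of_add_eq hab
      exact (mul_Lfun_add_mul_Lfun_le_iff _ _ hx hy).1 (h x y b hb (by linarith))
    exact ⟨fun x hx y hy a b ha hb hab => (key hx hy ha hb hab).1,
      fun x hx y hy a b ha hb hab => (key hx hy ha hb hab).2⟩
  · intro h x y μ hμ₀ hμ₁
    rcases hμ₀.eq_or_lt with rfl | hμ₀
    · simp
    rcases hμ₁.eq_or_lt with rfl | hμ₁
    · simp
    have hν : 0 < 1 - μ := sub_pos.2 hμ₁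
    by_cases hx : 0 < u x
    · by_cases hy : 0 < u y
      · have hsum := sub_add_cancel 1 μ
        exact (mul_Lfun_add_mul_Lfun_le_iff _ _ hx hy).2
          ⟨h.1 hx hy hν.le hμ₀.le hsum, h.2 hx hy hν.le hμ₀.le hsum⟩
      · simp only [Lfun, if_neg hy, EReal.coe_mul_bot_of_pos hμ₀, EReal.add_bot, bot_le]
    · simp only [Lfun, if_neg hx, EReal.coe_mul_bot_of_pos hν, EReal.bot_add, bot_le]

end ConcavityOfLfun

section HeatSolConvexity

variable {N : ℕ} {α t : ℝ} {u₀ : ℝ^(N) → ℝ}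

lemma rpow_one_div_rpow_neg_log {r : ℝ} (hα : 0 < α) (hr₀ : 0 ≤ r) (hr₁ : r ≤ 1) :
    ((-log r) ^ (1 / α)) ^ α = -log r := by
  rw [← rpow_mul (neg_nonneg.2 (log_nonpos hr₀ hr₁)), one_div_mul_cancel hα.ne', rpow_one]

lemma indicator_exp_neg_rpow_neg_log_eq (hα : 0 < α) (h0 : ∀ x, 0 ≤ u₀ x) (h1 : ∀ x, u₀ x ≤ 1) :
    {x | 0 < u₀ x}.indicator (fun x => exp (-((-log (u₀ x)) ^ (1 / α)) ^ α)) = u₀ := by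
  ext x
  by_cases hx : 0 < u₀ x
  · rw [indicator_of_mem (show x ∈ {x | 0 < u₀ x} from hx),
      rpow_one_div_rpow_neg_log hα hx.le (h1 x), neg_neg, exp_log hx]
  · rw [indicator_of_notMem (show x ∉ {x | 0 < u₀ x} from hx)]
    exact (h0 x).antisymm (not_lt.1 hx)

lemma heatSol_rpow_mul_rpow_le_of_convexOn (hα₁ : 1 ≤ α) (hα₂ : α ≤ 2) (h0 : ∀ x, 0 ≤ u₀ x)
    (h1 : ∀ x, u₀ x ≤ 1) (hconv : ConvexOn ℝ {x | 0 < u₀ x} fun x => (-log (u₀ x)) ^ (1 / α))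
    {a b l m : ℝ} (ha : 0 < a) (hb : 0 < b) (hab : a + b = 1) (hl : 0 < l) (hm : 0 < m)
    (hlm : a * l + b * m = 1) (ht : 0 < t) (x y : ℝ^(N)) :
    heatSol N u₀ t x ^ (a * l ^ (1 - α)) * heatSol N u₀ t y ^ (b * m ^ (1 - α))
      ≤ heatSol N u₀ t (a • x + b • y) := by
  rcases {x | 0 < u₀ x}.eq_empty_or_nonempty with hD | hD
  · have hu₀ : u₀ = 0 := by
      ext x
      exact (h0 x).antisymm' (not_lt.1 (eq_empty_iff_forall_notMem.1 hD x))
    have hzero (x : ℝ^(N)) : heatSol N u₀ t x = 0 := by simp [heatSol, hu₀]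
    have hp : 0 < a * l ^ (1 - α) := by positivity
    rw [hzero, hzero, hzero, zero_rpow hp.ne', zero_mul]
  · have := heatSol_indicator_exp_neg_rpow_mul_rpow_le hα₁ hα₂ hD
      (fun y _ => rpow_nonneg (neg_nonneg.2 (log_nonpos (h0 y) (h1 y))) _) hconv ha hb hab
      hl hm hlm ht x y
    rwa [indicator_exp_neg_rpow_neg_log_eq (by linarith) h0 h1] at this

lemma convexOn_neg_log_heatSol_rpow (hα₁ : 1 ≤ α) (hα₂ : α ≤ 2) (h0 : ∀ x, 0 ≤ u₀ x)
    (h1 : ∀ x, u₀ x ≤ 1) (hconv : ConvexOn ℝ {x | 0 < u₀ x} fun x => (-log (u₀ x)) ^ (1 / α))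
    (ht : 0 < t) :
    ConvexOn ℝ {x | 0 < heatSol N u₀ t x} fun x => (-log (heatSol N u₀ t x)) ^ (1 / α) := by
  have hα : 0 < α := by linarith
  have U_nonneg : ∀ x, 0 ≤ heatSol N u₀ t x := by
    rw [← heatFlow_eq_heatSol u₀ ht]
    exact heatFlow_nonneg h0 t
  have U_le_one : ∀ x, heatSol N u₀ t x ≤ 1 := by
    rw [← heatFlow_eq_heatSol u₀ ht]
    exact heatFlow_le h0 h1 t
  have root_nonneg : ∀ x, 0 ≤ (-log (heatSol N u₀ t x)) ^ (1 / α) := fun x =>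
    rpow_nonneg (neg_nonneg.2 (log_nonpos (U_nonneg x) (U_le_one x))) _
  have hpow : ∀ x, ((-log (heatSol N u₀ t x)) ^ (1 / α)) ^ α = -log (heatSol N u₀ t x) :=
    fun x => rpow_one_div_rpow_neg_log hα (U_nonneg x) (U_le_one x)
  have key {x y : ℝ^(N)} {a b l m : ℝ} (ha : 0 < a) (hb : 0 < b) (hab : a + b = 1) (hl : 0 < l)
      (hm : 0 < m) (hlm : a * l + b * m = 1) :=
    heatSol_rpow_mul_rpow_le_of_convexOn hα₁ hα₂ h0 h1 hconv ha hb hab hl hm hlm ht x y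
  have hpos {x y : ℝ^(N)} (hx : 0 < heatSol N u₀ t x) (hy : 0 < heatSol N u₀ t y) {a b : ℝ}
      (ha : 0 < a) (hb : 0 < b) (hab : a + b = 1) : 0 < heatSol N u₀ t (a • x + b • y) :=
    (mul_pos (rpow_pos_of_pos hx _) (rpow_pos_of_pos hy _)).trans_le
      (key ha hb hab one_pos one_pos (by rw [mul_one, mul_one, hab]))
  refine convexOn_iff_forall_pos.2
    ⟨convex_iff_forall_pos.2 fun x hx y hy a b => hpos hx hy, fun x hx y hy a b ha hb hab => ?_⟩
  refine le_of_forall_weights_rpow_le hα ha hb (root_nonneg x) (root_nonneg y) (root_nonneg _)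
    fun l m hl hm hlm => ?_
  rw [hpow, hpow, hpow]
  linarith [(rpow_mul_rpow_le_iff_log_le hx hy (hpos hx hy ha hb hab)).1 (key ha hb hab hl hm hlm)]

end HeatSolConvexity

theorem heat_preserves_Lalpha_concavity_general {N : ℕ} {α : ℝ} (hα₁ : 1 ≤ α) (hα₂ : α ≤ 2)
    {u₀ : ℝ^(N) → ℝ} (h0 : ∀ x, 0 ≤ u₀ x) (h1 : ∀ x, u₀ x ≤ 1)
    (hconc : ERealConcaveOn (fun x => Lfun α (u₀ x))) {t : ℝ} (ht : 0 < t) :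
    ERealConcaveOn (fun x => Lfun α (heatSol N u₀ t x)) :=
  eRealConcaveOn_Lfun_iff_convexOn.2 <| convexOn_neg_log_heatSol_rpow hα₁ hα₂ h0 h1
    (eRealConcaveOn_Lfun_iff_convexOn.1 hconc) ht

/-- The heat flow on `ℝ^N` preserves concavity of `L_α ∘ u` for `1 ≤ α ≤ 2`. -/
theorem heat_preserves_Lalpha_concavity
    (N : ℕ) (hN : 1 ≤ N) (α : ℝ) (hα₁ : 1 ≤ α) (hα₂ : α ≤ 2)
    (u₀ : EuclideanSpace ℝ (Fin N) → ℝ) (hmeas : Measurable u₀)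
    (h0 : ∀ x, 0 ≤ u₀ x) (h1 : ∀ x, u₀ x ≤ 1)
    (hconc : ERealConcaveOn (fun x => Lfun α (u₀ x))) :
    ∀ t : ℝ, 0 < t → ERealConcaveOn (fun x => Lfun α (heatSol N u₀ t x)) :=
  fun _t ht => heat_preserves_Lalpha_concavity_general hα₁ hα₂ h0 h1 hconc ht
end

section
/- Let N ≥ 1 and let u₀ : ℝ^N → ℝ be a bounded nonnegative measurable function with compact support and ∫_{ℝ^N} u₀ > 0. Then for every α with 1 ≤ α < 2 there exists T_α > 0 such that for all t ≥ T_α: 0 < [e^{tΔ}u₀](x) < 1 for all x ∈ ℝ^N, and the function x ↦ L_α([e^{tΔ}u₀](x)) is concave on ℝ^N; in particular, e^{tΔ}u₀ is α-logconcave in ℝ^N for all t ≥ T_α. -/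
open MeasureTheory Real

/-!
The potential `V = -log (e^{tΔ}μ)` is, up to a constant, `|x|²/(4t)` minus a log-Laplace transform
of a measure living in a ball of radius `R`.  Along a line of direction `e` that transform is the
cumulant generating function of a variable bounded by `R|e|/(2t)`; its second derivative is a
variance of this variable, hence at most `(R|e|/(2t))²`.  With `p` the distance from `x` to the
ball, this yields `V'' ≥ |e|²/(2t) · (1 - R²/(2t))` and `|V'| ≤ |e|(p + 2R)/(2t)`, while
`V ≥ p²/(4t) + K` where `K` grows like `(N/2) log t`.  Convexity of `V^{1/α}` amounts to
`(α - 1) V'² ≤ α V V''`.  At infinity its leading part reads `2(α - 1) ≤ α`, strict for `α < 2`;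
this slack absorbs the error terms once `K ≥ α²/(2 - α)` and `R² ≤ (2 - α) t`.
-/

section HeatFlowConcavity

open ProbabilityTheory Set Filter
open scoped RealInnerProductSpace Topology

section BoundedCgf

variable {Ω : Type*} [MeasurableSpace Ω] {μ : Measure Ω} [IsFiniteMeasure μ] {X : Ω → ℝ} {a b : ℝ}

lemma mem_interior_integrableExpSet_of_mem_Icc (hX : AEMeasurable X μ)
    (hb : ∀ᵐ ω ∂μ, X ω ∈ Icc a b) (s : ℝ) : s ∈ interior (integrableExpSet X μ) := by
  have h_univ : integrableExpSet X μ = univ :=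
    eq_univ_of_forall fun _ => integrable_exp_mul_of_mem_Icc hX hb
  simp only [h_univ, interior_univ, mem_univ]

lemma analyticAt_cgf_of_mem_Icc (hX : AEMeasurable X μ) (hb : ∀ᵐ ω ∂μ, X ω ∈ Icc a b) (s : ℝ) :
    AnalyticAt ℝ (cgf X μ) s :=
  analyticAt_cgf (mem_interior_integrableExpSet_of_mem_Icc hX hb s)

lemma deriv_cgf_mem_Icc [NeZero μ] (hX : AEMeasurable X μ) (hb : ∀ᵐ ω ∂μ, X ω ∈ Icc a b) (s : ℝ) :
    deriv (cgf X μ) s ∈ Icc a b := by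
  have : IsProbabilityMeasure (μ.tilted (s * X ·)) :=
    isProbabilityMeasure_tilted (integrable_exp_mul_of_mem_Icc hX hb)
  have h_ac := tilted_absolutelyContinuous μ (s * X ·)
  rw [← integral_tilted_mul_self (mem_interior_integrableExpSet_of_mem_Icc hX hb s)]
  exact (convex_Icc a b).integral_mem isClosed_Icc (h_ac hb)
    (Integrable.of_mem_Icc a b (hX.mono_ac h_ac) (h_ac hb))

lemma deriv_deriv_cgf_le_sq [NeZero μ] (hX : AEMeasurable X μ) (hb : ∀ᵐ ω ∂μ, X ω ∈ Icc a b)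
    (s : ℝ) : deriv (deriv (cgf X μ)) s ≤ ((b - a) / 2) ^ 2 := by
  have : IsProbabilityMeasure (μ.tilted (s * X ·)) :=
    isProbabilityMeasure_tilted (integrable_exp_mul_of_mem_Icc hX hb)
  have h_ac := tilted_absolutelyContinuous μ (s * X ·)
  have h_var := variance_le_sq_of_bounded (h_ac hb) (hX.mono_ac h_ac)
  rwa [variance_tilted_mul (mem_interior_integrableExpSet_of_mem_Icc hX hb s), iteratedDeriv_succ,
    iteratedDeriv_one] at h_var

end BoundedCgf

section RealConvexity

variable {α : ℝ}

lemma convexOn_rpow_one_div_of_deriv {f f' f'' : ℝ → ℝ} (hα : 0 < α)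
    (hf : ∀ s, HasDerivAt f (f' s) s) (hf' : ∀ s, HasDerivAt f' (f'' s) s) (hpos : ∀ s, 0 < f s)
    (h : ∀ s, (α - 1) * f' s ^ 2 ≤ α * (f s * f'' s)) :
    ConvexOn ℝ univ fun s => f s ^ (1 / α) := by
  have hd s : HasDerivAt (fun s => f s ^ (1 / α)) (f' s * (1 / α) * f s ^ (1 / α - 1)) s :=
    (hf s).rpow_const (.inl (hpos s).ne')
  have hd' s := ((hf' s).mul_const (1 / α)).mul
    ((hf s).rpow_const (p := 1 / α - 1) (.inl (hpos s).ne'))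
  refine convexOn_of_hasDerivWithinAt2_nonneg convex_univ
    (fun s _ => (hd s).continuousAt.continuousWithinAt)
    (fun s _ => (hd s).hasDerivWithinAt) (fun s _ => (hd' s).hasDerivWithinAt) fun s _ => ?_
  have h_pow : f s ^ (1 / α - 1) = f s ^ (1 / α - 1 - 1) * f s := by
    rw [← rpow_add_one (hpos s).ne', sub_add_cancel]
  have h_factor : f'' s * (1 / α) * f s ^ (1 / α - 1) +
      f' s * (1 / α) * (f' s * (1 / α - 1) * f s ^ (1 / α - 1 - 1)) =
      f s ^ (1 / α - 1 - 1) * (1 / α) ^ 2 * (α * (f s * f'' s) - (α - 1) * f' s ^ 2) := by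
    rw [h_pow]
    field_simp
    ring
  rw [h_factor]
  have := rpow_pos_of_pos (hpos s) (1 / α - 1 - 1)
  exact mul_nonneg (by positivity) (sub_nonneg.2 (h s))

lemma convexOn_univ_of_forall_line {E : Type*} [AddCommGroup E] [Module ℝ E] {f : E → ℝ}
    (h : ∀ x e : E, ConvexOn ℝ univ fun s : ℝ => f (x + s • e)) : ConvexOn ℝ univ f := by
  refine ⟨convex_univ, fun x _ y _ a b ha hb hab => ?_⟩
  have h_end : x + (1 : ℝ) • (y - x) = y := by module
  have h_mid : x + b • (y - x) = a • x + b • y := by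
    rw [eq_sub_of_add_eq hab]
    module
  have h_line := (h x (y - x)).2 (mem_univ 0) (mem_univ 1) ha hb hab
  simpa only [smul_eq_mul, mul_zero, mul_one, zero_add, zero_smul, add_zero, h_end, h_mid]
    using h_line

lemma four_mul_sub_one_mul_add_sq_le (hα : α ≠ 2) (p q : ℝ) :
    4 * (α - 1) * (p + q) ^ 2 ≤ α ^ 2 * (p ^ 2 + (α / (2 - α) * q) ^ 2) := by
  have hα' : 2 - α ≠ 0 := sub_ne_zero.2 hα.symm
  -- `4(α - 1) = α² - (2 - α)²`, and the optimal `p` satisfies `(2 - α)² (p + q) = α² q`.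
  have h_squares : α ^ 2 * (p ^ 2 + (α / (2 - α) * q) ^ 2) - 4 * (α - 1) * (p + q) ^ 2 =
      ((α ^ 2 * q - (2 - α) ^ 2 * (p + q)) / (2 - α)) ^ 2 + (α * q) ^ 2 := by
    field_simp
    ring
  rw [← sub_nonneg, h_squares]
  positivity

lemma sub_one_mul_sq_le_of_gaussian_bounds {t R n p f f' f'' : ℝ} (hα : 0 < α) (hα2 : α < 2)
    (ht : 0 < t) (hRt : R ^ 2 ≤ (2 - α) * t) (hf : p ^ 2 / (4 * t) + α ^ 2 / (2 - α) ≤ f)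
    (hf' : |f'| ≤ n * (p + 2 * R) / (2 * t)) (hf'' : n ^ 2 / (2 * t) * (α / 2) ≤ f'') :
    (α - 1) * f' ^ 2 ≤ α * (f * f'') := by
  have hα2' : 0 < 2 - α := sub_pos.2 hα2
  have hf_nonneg : 0 ≤ f := le_trans (by positivity) hf
  have hf''_nonneg : 0 ≤ f'' := le_trans (by positivity) hf''
  rcases le_total α 1 with hα1 | hα1
  · exact (mul_nonpos_of_nonpos_of_nonneg (by linarith) (sq_nonneg _)).trans (by positivity)
  have h_error : (α / (2 - α) * (2 * R)) ^ 2 ≤ 4 * t * (α ^ 2 / (2 - α)) := calc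
    _ = 4 * (α / (2 - α)) ^ 2 * R ^ 2 := by ring
    _ ≤ 4 * (α / (2 - α)) ^ 2 * ((2 - α) * t) := by gcongr
    _ = 4 * t * (α ^ 2 / (2 - α)) := by field_simp
  calc (α - 1) * f' ^ 2 ≤ (α - 1) * (n * (p + 2 * R) / (2 * t)) ^ 2 :=
        mul_le_mul_of_nonneg_left (sq_le_sq' (abs_le.1 hf').1 (abs_le.1 hf').2) (by linarith)
    _ = (n / (4 * t)) ^ 2 * (4 * (α - 1) * (p + 2 * R) ^ 2) := by field_simp; ring
    _ ≤ (n / (4 * t)) ^ 2 * (α ^ 2 * (p ^ 2 + (α / (2 - α) * (2 * R)) ^ 2)) := by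
        gcongr ?_ * ?_
        exact four_mul_sub_one_mul_add_sq_le hα2.ne p (2 * R)
    _ ≤ (n / (4 * t)) ^ 2 * (α ^ 2 * (p ^ 2 + 4 * t * (α ^ 2 / (2 - α)))) := by gcongr
    _ = α * ((p ^ 2 / (4 * t) + α ^ 2 / (2 - α)) * (n ^ 2 / (2 * t) * (α / 2))) := by
        field_simp; ring
    _ ≤ α * (f * f'') := by gcongr

end RealConvexity

section GaussTransform

variable {E : Type*} [NormedAddCommGroup E] {R t : ℝ}

lemma exp_neg_norm_sub_sq_le_one (ht : 0 ≤ t) (x y : E) : exp (-‖x - y‖ ^ 2 / (4 * t)) ≤ 1 :=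
  exp_le_one_iff.2 (div_nonpos_of_nonpos_of_nonneg (neg_nonpos.2 (sq_nonneg _)) (by positivity))

lemma exp_neg_norm_add_smul_sub_sq [InnerProductSpace ℝ E] (ht : t ≠ 0) (x y e : E) (s : ℝ) :
    exp (-‖x + s • e - y‖ ^ 2 / (4 * t)) =
      exp (-(s ^ 2 * ‖e‖ ^ 2 + 2 * s * ⟪x, e⟫) / (4 * t)) *
        exp (-‖x - y‖ ^ 2 / (4 * t) + s * (⟪y, e⟫ / (2 * t))) := by
  have h_norm : ‖x + s • e - y‖ ^ 2 =
      ‖x - y‖ ^ 2 + 2 * (s * (⟪x, e⟫ - ⟪y, e⟫)) + s ^ 2 * ‖e‖ ^ 2 := by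
    rw [add_sub_right_comm, norm_add_sq_real, inner_smul_right, inner_sub_left, norm_smul, mul_pow,
      norm_eq_abs, sq_abs]
  rw [← exp_add, h_norm]
  congr 1
  field_simp
  ring

variable [MeasurableSpace E] {μ : Measure E}

/-- The Gauss transform `x ↦ ∫ exp(-|x - y|²/(4t)) dμ(y)` of a measure: the heat flow of `μ` at time
`t` without the factor `(4πt)^{-N/2}`, so that no dimension enters. -/
noncomputable def gaussTransform (μ : Measure E) (t : ℝ) (x : E) : ℝ :=
  ∫ y, exp (-‖x - y‖ ^ 2 / (4 * t)) ∂μ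

/-- The probability measure proportional to `exp(-|x - y|²/(4t)) dμ(y)`: the conditional law of the
starting point of a heat particle that is found at `x` at time `t`. -/
noncomputable def gaussTilted (μ : Measure E) (t : ℝ) (x : E) : Measure E :=
  μ.tilted fun y => -‖x - y‖ ^ 2 / (4 * t)

section Bounds

lemma gaussTransform_smul {c : ℝ} (hc : 0 ≤ c) (x : E) :
    gaussTransform (ENNReal.ofReal c • μ) t x = c * gaussTransform μ t x := by
  rw [gaussTransform, integral_smul_measure, ENNReal.toReal_ofReal hc, smul_eq_mul, gaussTransform]

variable [OpensMeasurableSpace E] [IsFiniteMeasure μ]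

lemma integrable_exp_neg_norm_sub_sq (ht : 0 ≤ t) (x : E) :
    Integrable (fun y => exp (-‖x - y‖ ^ 2 / (4 * t))) μ := by
  refine .of_mem_Icc 0 1 (Continuous.aemeasurable (by fun_prop)) (.of_forall fun y => ?_)
  exact ⟨(exp_pos _).le, exp_neg_norm_sub_sq_le_one ht x y⟩

lemma gaussTransform_pos [NeZero μ] (ht : 0 ≤ t) (x : E) : 0 < gaussTransform μ t x :=
  integral_exp_pos (integrable_exp_neg_norm_sub_sq ht x)

lemma gaussTransform_le_measureReal_univ (ht : 0 ≤ t) (x : E) :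
    gaussTransform μ t x ≤ μ.real univ := by
  have h_bound : gaussTransform μ t x ≤ ∫ _, 1 ∂μ :=
    integral_mono (integrable_exp_neg_norm_sub_sq ht x) (integrable_const _)
      (exp_neg_norm_sub_sq_le_one ht x)
  rwa [integral_const, smul_eq_mul, mul_one] at h_bound

lemma gaussTransform_le_exp_mul (hμ : ∀ᵐ y ∂μ, ‖y‖ ≤ R) (ht : 0 ≤ t) (x : E) :
    gaussTransform μ t x ≤ exp (-max (‖x‖ - R) 0 ^ 2 / (4 * t)) * μ.real univ := by
  have h_bound : gaussTransform μ t x ≤ ∫ _, exp (-max (‖x‖ - R) 0 ^ 2 / (4 * t)) ∂μ := by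
    refine integral_mono_ae (integrable_exp_neg_norm_sub_sq ht x) (integrable_const _) ?_
    filter_upwards [hμ] with y hy
    have h_dist : max (‖x‖ - R) 0 ≤ ‖x - y‖ :=
      max_le (by linarith [norm_sub_norm_le x y]) (norm_nonneg _)
    gcongr
  rwa [integral_const, smul_eq_mul, mul_comm] at h_bound

lemma le_neg_log_gaussTransform [NeZero μ] (hμ : ∀ᵐ y ∂μ, ‖y‖ ≤ R) (ht : 0 ≤ t) (x : E) :
    max (‖x‖ - R) 0 ^ 2 / (4 * t) - log (μ.real univ) ≤ -log (gaussTransform μ t x) := by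
  have h_log := log_le_log (gaussTransform_pos ht x) (gaussTransform_le_exp_mul hμ ht x)
  rw [log_mul (exp_pos _).ne' measureReal_univ_pos.ne', log_exp, neg_div] at h_log
  linarith

lemma isProbabilityMeasure_gaussTilted [NeZero μ] (ht : 0 ≤ t) (x : E) :
    IsProbabilityMeasure (gaussTilted μ t x) :=
  isProbabilityMeasure_tilted (integrable_exp_neg_norm_sub_sq ht x)

end Bounds

section Lines

variable [InnerProductSpace ℝ E]

/-- The cumulant generating function of `y ↦ ⟪y, e⟫ / (2t)` under `gaussTilted μ t x`: the
non-quadratic part of the logarithm of the Gauss transform along the line `x + ℝe`. -/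
noncomputable def lineCgf (μ : Measure E) (t : ℝ) (x e : E) : ℝ → ℝ :=
  cgf (fun y => ⟪y, e⟫ / (2 * t)) (gaussTilted μ t x)

lemma ae_gaussTilted_inner_div_mem_Icc (hμ : ∀ᵐ y ∂μ, ‖y‖ ≤ R) (ht : 0 ≤ t) (x e : E) :
    ∀ᵐ y ∂gaussTilted μ t x,
      ⟪y, e⟫ / (2 * t) ∈ Icc (-(R * ‖e‖ / (2 * t))) (R * ‖e‖ / (2 * t)) := by
  filter_upwards [tilted_absolutelyContinuous μ _ hμ] with y hy
  rw [mem_Icc, ← abs_le, abs_div, abs_of_nonneg (by positivity : 0 ≤ 2 * t)]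
  gcongr
  exact (abs_real_inner_le_norm y e).trans (by gcongr)

variable [OpensMeasurableSpace E]

lemma aemeasurable_inner_div (ν : Measure E) (t : ℝ) (e : E) :
    AEMeasurable (fun y => ⟪y, e⟫ / (2 * t)) ν :=
  Continuous.aemeasurable (by fun_prop)

variable [IsFiniteMeasure μ] [NeZero μ]

lemma log_gaussTransform_add_smul (ht : 0 < t) (x e : E) (s : ℝ) :
    log (gaussTransform μ t (x + s • e)) = log (gaussTransform μ t x) -
      (s ^ 2 * ‖e‖ ^ 2 + 2 * s * ⟪x, e⟫) / (4 * t) + lineCgf μ t x e s := by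
  set I := ∫ y, exp (-‖x - y‖ ^ 2 / (4 * t) + s * (⟪y, e⟫ / (2 * t))) ∂μ with hI
  have h_split : gaussTransform μ t (x + s • e) =
      exp (-(s ^ 2 * ‖e‖ ^ 2 + 2 * s * ⟪x, e⟫) / (4 * t)) * I := by
    simp only [gaussTransform, exp_neg_norm_add_smul_sub_sq ht.ne', integral_const_mul, hI]
  have hI_pos : 0 < I :=
    pos_of_mul_pos_right (h_split ▸ gaussTransform_pos ht.le (x + s • e)) (exp_pos _).le
  have h_cgf : lineCgf μ t x e s = log (I / gaussTransform μ t x) := by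
    simp only [lineCgf, cgf, mgf, gaussTilted, integral_exp_tilted, Pi.add_apply, hI,
      gaussTransform]
  rw [h_cgf, h_split, log_mul (exp_pos _).ne' hI_pos.ne', log_exp,
    log_div hI_pos.ne' (gaussTransform_pos ht.le x).ne']
  ring

lemma analyticAt_lineCgf (hμ : ∀ᵐ y ∂μ, ‖y‖ ≤ R) (ht : 0 ≤ t) (x e : E) (s : ℝ) :
    AnalyticAt ℝ (lineCgf μ t x e) s :=
  have := isProbabilityMeasure_gaussTilted (μ := μ) ht x
  analyticAt_cgf_of_mem_Icc (aemeasurable_inner_div _ t e)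
    (ae_gaussTilted_inner_div_mem_Icc hμ ht x e) s

lemma abs_deriv_lineCgf_le (hμ : ∀ᵐ y ∂μ, ‖y‖ ≤ R) (ht : 0 ≤ t) (x e : E) (s : ℝ) :
    |deriv (lineCgf μ t x e) s| ≤ R * ‖e‖ / (2 * t) :=
  have := isProbabilityMeasure_gaussTilted (μ := μ) ht x
  abs_le.2 (deriv_cgf_mem_Icc (aemeasurable_inner_div _ t e)
    (ae_gaussTilted_inner_div_mem_Icc hμ ht x e) s)

lemma deriv_deriv_lineCgf_le (hμ : ∀ᵐ y ∂μ, ‖y‖ ≤ R) (ht : 0 ≤ t) (x e : E) (s : ℝ) :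
    deriv (deriv (lineCgf μ t x e)) s ≤ (R * ‖e‖ / (2 * t)) ^ 2 := by
  have := isProbabilityMeasure_gaussTilted (μ := μ) ht x
  refine (deriv_deriv_cgf_le_sq (aemeasurable_inner_div _ t e)
    (ae_gaussTilted_inner_div_mem_Icc hμ ht x e) s).trans_eq ?_
  ring

lemma hasDerivAt_neg_log_gaussTransform_add_smul (hμ : ∀ᵐ y ∂μ, ‖y‖ ≤ R) (ht : 0 < t) (x e : E)
    (s : ℝ) :
    HasDerivAt (fun s : ℝ => -log (gaussTransform μ t (x + s • e)))
      (⟪x + s • e, e⟫ / (2 * t) - deriv (lineCgf μ t x e) s) s := by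
  have h_quad : HasDerivAt (fun s : ℝ => (s ^ 2 * ‖e‖ ^ 2 + 2 * s * ⟪x, e⟫) / (4 * t))
      ((2 * s * ‖e‖ ^ 2 + 2 * ⟪x, e⟫) / (4 * t)) s := by
    simpa using ((((hasDerivAt_id s).pow 2).mul_const (‖e‖ ^ 2)).add
      (((hasDerivAt_id s).const_mul 2).mul_const ⟪x, e⟫)).div_const (4 * t)
  have h_cgf := (analyticAt_lineCgf hμ ht.le x e s).differentiableAt.hasDerivAt
  simp only [log_gaussTransform_add_smul ht]
  refine ((h_quad.const_sub (log (gaussTransform μ t x))).add h_cgf).neg.congr_deriv ?_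
  rw [inner_add_left, real_inner_smul_left, real_inner_self_eq_norm_sq]
  field_simp
  ring

lemma hasDerivAt_inner_add_smul_sub_deriv_lineCgf (hμ : ∀ᵐ y ∂μ, ‖y‖ ≤ R) (ht : 0 ≤ t) (x e : E)
    (s : ℝ) :
    HasDerivAt (fun s : ℝ => ⟪x + s • e, e⟫ / (2 * t) - deriv (lineCgf μ t x e) s)
      (‖e‖ ^ 2 / (2 * t) - deriv (deriv (lineCgf μ t x e)) s) s := by
  simp only [inner_add_left, real_inner_smul_left, real_inner_self_eq_norm_sq]
  have h_lin :
      HasDerivAt (fun s : ℝ => (⟪x, e⟫ + s * ‖e‖ ^ 2) / (2 * t)) (‖e‖ ^ 2 / (2 * t)) s := by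
    simpa using (((hasDerivAt_id s).mul_const (‖e‖ ^ 2)).const_add ⟪x, e⟫).div_const (2 * t)
  exact h_lin.sub (analyticAt_lineCgf hμ ht x e s).deriv.differentiableAt.hasDerivAt

lemma abs_inner_sub_deriv_lineCgf_le (hμ : ∀ᵐ y ∂μ, ‖y‖ ≤ R) (ht : 0 ≤ t) (x e : E) (s : ℝ) :
    |⟪x + s • e, e⟫ / (2 * t) - deriv (lineCgf μ t x e) s| ≤
      ‖e‖ * (‖x + s • e‖ + R) / (2 * t) := by
  have h_inner : |⟪x + s • e, e⟫ / (2 * t)| ≤ ‖x + s • e‖ * ‖e‖ / (2 * t) := by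
    rw [abs_div, abs_of_nonneg (by positivity : 0 ≤ 2 * t)]
    gcongr
    exact abs_real_inner_le_norm _ _
  calc _ ≤ |⟪x + s • e, e⟫ / (2 * t)| + |deriv (lineCgf μ t x e) s| := abs_sub _ _
    _ ≤ ‖x + s • e‖ * ‖e‖ / (2 * t) + R * ‖e‖ / (2 * t) :=
        add_le_add h_inner (abs_deriv_lineCgf_le hμ ht x e s)
    _ = ‖e‖ * (‖x + s • e‖ + R) / (2 * t) := by ring

theorem convexOn_neg_log_gaussTransform_rpow {α : ℝ} (hμ : ∀ᵐ y ∂μ, ‖y‖ ≤ R) (hα : 0 < α)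
    (hα2 : α < 2) (ht : 0 < t) (hRt : R ^ 2 ≤ (2 - α) * t)
    (h_mass : α ^ 2 / (2 - α) ≤ -log (μ.real univ)) :
    ConvexOn ℝ univ fun x => (-log (gaussTransform μ t x)) ^ (1 / α) := by
  refine convexOn_univ_of_forall_line fun x e => ?_
  have h_lower (z : E) :
      max (‖z‖ - R) 0 ^ 2 / (4 * t) + α ^ 2 / (2 - α) ≤ -log (gaussTransform μ t z) := by
    linarith [le_neg_log_gaussTransform hμ ht.le z]
  have : 0 < 2 - α := sub_pos.2 hα2
  refine convexOn_rpow_one_div_of_deriv hα (hasDerivAt_neg_log_gaussTransform_add_smul hμ ht x e)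
    (hasDerivAt_inner_add_smul_sub_deriv_lineCgf hμ ht.le x e)
    (fun s => lt_of_lt_of_le (by positivity) (h_lower _)) fun s => ?_
  refine sub_one_mul_sq_le_of_gaussian_bounds hα hα2 ht hRt (h_lower _)
    ((abs_inner_sub_deriv_lineCgf_le hμ ht.le x e s).trans ?_) (n := ‖e‖) ?_
  · gcongr ‖e‖ * ?_ / (2 * t)
    linarith [le_max_left (‖x + s • e‖ - R) 0]
  · have h_curv : α / 2 ≤ 1 - R ^ 2 / (2 * t) := by
      have : R ^ 2 / (2 * t) ≤ (2 - α) / 2 := by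
        rw [div_le_div_iff₀ (by positivity) two_pos]
        linarith
      linarith
    calc ‖e‖ ^ 2 / (2 * t) * (α / 2) ≤ ‖e‖ ^ 2 / (2 * t) * (1 - R ^ 2 / (2 * t)) := by gcongr
      _ = ‖e‖ ^ 2 / (2 * t) - (R * ‖e‖ / (2 * t)) ^ 2 := by ring
      _ ≤ _ := sub_le_sub_left (deriv_deriv_lineCgf_le hμ ht.le x e s) _

end Lines

end GaussTransform

lemma erealConcaveOn_Lfun {E : Type*} [AddCommGroup E] [Module ℝ E] {α : ℝ} {u : E → ℝ}
    (hu : ∀ x, 0 < u x) (h : ConvexOn ℝ univ fun x => (-log (u x)) ^ (1 / α)) :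
    ERealConcaveOn fun x => Lfun α (u x) := by
  intro x y θ hθ0 hθ1
  simp only [Lfun, hu, if_true]
  have h_conv := h.2 (mem_univ x) (mem_univ y) (sub_nonneg.2 hθ1) hθ0 (sub_add_cancel 1 θ)
  simp only [smul_eq_mul] at h_conv
  norm_cast
  linarith

section HeatFlow

variable {N : ℕ}

/-- The heat flow `e^{tΔ}μ` on `ℝ^N` of a measure; `heatSol` is the case of an initial density. -/
noncomputable def heatMeasure (μ : Measure (EuclideanSpace ℝ (Fin N))) (t : ℝ)
    (x : EuclideanSpace ℝ (Fin N)) : ℝ :=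
  ∫ y, gauss N (x - y) t ∂μ

lemma tendsto_four_mul_pi_mul_rpow (hN : 1 ≤ N) :
    Tendsto (fun t : ℝ => (4 * π * t) ^ (-(N : ℝ) / 2)) atTop (𝓝 0) := by
  have hN' : (0 : ℝ) < N / 2 := by positivity
  simp only [neg_div]
  exact (tendsto_rpow_neg_atTop hN').comp (tendsto_id.const_mul_atTop (by positivity))

lemma heatMeasure_eq_mul_gaussTransform (μ : Measure (EuclideanSpace ℝ (Fin N))) (t : ℝ)
    (x : EuclideanSpace ℝ (Fin N)) :
    heatMeasure μ t x = (4 * π * t) ^ (-(N : ℝ) / 2) * gaussTransform μ t x := by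
  simp only [heatMeasure, gauss, integral_const_mul, gaussTransform]

section FiniteMeasure

variable {μ : Measure (EuclideanSpace ℝ (Fin N))} [IsFiniteMeasure μ] {R t : ℝ}

lemma heatMeasure_le (ht : 0 ≤ t) (x : EuclideanSpace ℝ (Fin N)) :
    heatMeasure μ t x ≤ (4 * π * t) ^ (-(N : ℝ) / 2) * μ.real univ := by
  rw [heatMeasure_eq_mul_gaussTransform]
  gcongr
  exact gaussTransform_le_measureReal_univ ht x

variable [NeZero μ]

lemma heatMeasure_pos (ht : 0 < t) (x : EuclideanSpace ℝ (Fin N)) : 0 < heatMeasure μ t x := by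
  rw [heatMeasure_eq_mul_gaussTransform]
  exact mul_pos (by positivity) (gaussTransform_pos ht.le x)

lemma erealConcaveOn_Lfun_mul_heatMeasure {α κ : ℝ} (hμ : ∀ᵐ y ∂μ, ‖y‖ ≤ R) (hα : 0 < α)
    (hα2 : α < 2) (ht : 0 < t) (hRt : R ^ 2 ≤ (2 - α) * t)
    (h_mass : (4 * π * t) ^ (-(N : ℝ) / 2) * μ.real univ ≤ exp (-(α ^ 2 / (2 - α))))
    (hκ : 0 < κ) (hκ1 : κ ≤ 1) : ERealConcaveOn fun x => Lfun α (κ * heatMeasure μ t x) := by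
  refine erealConcaveOn_Lfun (fun x => mul_pos hκ (heatMeasure_pos ht x)) ?_
  set c := κ * (4 * π * t) ^ (-(N : ℝ) / 2) with hc
  have hc_pos : 0 < c := by positivity
  have : NeZero (ENNReal.ofReal c • μ) := ⟨by simp [hc_pos, NeZero.ne μ]⟩
  have : IsFiniteMeasure (ENNReal.ofReal c • μ) := μ.smul_finite ENNReal.ofReal_ne_top
  have hc_mass : α ^ 2 / (2 - α) ≤ -log ((ENNReal.ofReal c • μ).real univ) := by
    rw [measureReal_ennreal_smul_apply, ENNReal.toReal_ofReal hc_pos.le, le_neg,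
      log_le_iff_le_exp (mul_pos hc_pos measureReal_univ_pos), hc, mul_assoc]
    exact (mul_le_of_le_one_left (by positivity) hκ1).trans h_mass
  simp only [heatMeasure_eq_mul_gaussTransform, ← mul_assoc, ← hc, ← gaussTransform_smul hc_pos.le]
  exact convexOn_neg_log_gaussTransform_rpow (hμ.filter_mono (Measure.ae_smul_measure_le _))
    hα hα2 ht hRt hc_mass

end FiniteMeasure

theorem eventually_alpha_logconcave_general (hN : 1 ≤ N) (μ : Measure (EuclideanSpace ℝ (Fin N)))
    [IsFiniteMeasure μ] [NeZero μ] {R : ℝ} (hμ : ∀ᵐ y ∂μ, ‖y‖ ≤ R) {α : ℝ} (hα : 0 < α)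
    (hα2 : α < 2) :
    ∃ T : ℝ, 0 < T ∧ ∀ t : ℝ, T ≤ t →
      (∀ x, 0 < heatMeasure μ t x ∧ heatMeasure μ t x < 1) ∧
      ERealConcaveOn (fun x => Lfun α (heatMeasure μ t x)) ∧
      AlphaLogConcave α (heatMeasure μ t) := by
  have hα2' : 0 < 2 - α := sub_pos.2 hα2
  have h_time : ∀ᶠ t : ℝ in atTop, R ^ 2 ≤ (2 - α) * t :=
    (tendsto_id.const_mul_atTop hα2').eventually_ge_atTop _
  have h_mass : ∀ᶠ t : ℝ in atTop,
      (4 * π * t) ^ (-(N : ℝ) / 2) * μ.real univ ≤ exp (-(α ^ 2 / (2 - α))) :=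
    ((tendsto_four_mul_pi_mul_rpow hN).mul_const _).eventually_le_const (by simp [exp_pos])
  obtain ⟨T, hT⟩ := eventually_atTop.1 (h_time.and h_mass)
  refine ⟨max T 1, by positivity, fun t ht => ?_⟩
  obtain ⟨hRt, h_mass_t⟩ := hT t (le_of_max_le_left ht)
  have ht_pos : 0 < t := one_pos.trans_le (le_of_max_le_right ht)
  have h_concave {κ : ℝ} (hκ : 0 < κ) (hκ1 : κ ≤ 1) :=
    erealConcaveOn_Lfun_mul_heatMeasure hμ hα hα2 ht_pos hRt h_mass_t hκ hκ1
  have h_lt_one x : heatMeasure μ t x < 1 :=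
    ((heatMeasure_le ht_pos.le x).trans h_mass_t).trans_lt
      (exp_lt_one_iff.2 (neg_lt_zero.2 (by positivity)))
  refine ⟨fun x => ⟨heatMeasure_pos ht_pos x, h_lt_one x⟩, ?_, 1, one_pos, fun _ => h_concave⟩
  simpa only [one_mul] using h_concave one_pos le_rfl

lemma exists_heatMeasure_eq_heatSol {u₀ : EuclideanSpace ℝ (Fin N) → ℝ} (h0 : 0 ≤ u₀)
    (hsupp : HasCompactSupport u₀) (hint : 0 < ∫ y, u₀ y) :
    ∃ (μ : Measure (EuclideanSpace ℝ (Fin N))) (R : ℝ), IsFiniteMeasure μ ∧ NeZero μ ∧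
      (∀ᵐ y ∂μ, ‖y‖ ≤ R) ∧ heatMeasure μ = heatSol N u₀ := by
  have hu : Integrable u₀ := .of_integral_ne_zero hint.ne'
  have h_density : AEMeasurable (fun y => ENNReal.ofReal (u₀ y)) := hu.aemeasurable.ennreal_ofReal
  obtain ⟨R, hR⟩ := hsupp.isCompact.isBounded.exists_norm_le
  refine ⟨volume.withDensity fun y => ENNReal.ofReal (u₀ y), R,
    isFiniteMeasure_withDensity_ofReal hu.2, ⟨fun h_zero => ?_⟩, ?_, ?_⟩
  · have h_ae : u₀ ≤ᵐ[volume] 0 := by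
      filter_upwards [(withDensity_eq_zero_iff h_density).1 h_zero] with y hy
      exact ENNReal.ofReal_eq_zero.1 hy
    exact hint.not_ge (integral_nonpos_of_ae h_ae)
  · refine (ae_withDensity_iff' h_density).2 (.of_forall fun y hy => hR y (subset_tsupport _ ?_))
    contrapose! hy
    simp_all
  · ext t x
    rw [heatMeasure, heatSol, integral_withDensity_eq_integral_toReal_smul₀ h_density
      (.of_forall fun _ => ENNReal.ofReal_lt_top)]
    simp only [ENNReal.toReal_ofReal (h0 _), smul_eq_mul, mul_comm]

end HeatFlow

end HeatFlowConcavity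

/-- For compactly supported nontrivial initial data, `e^{tΔ}u₀` eventually
becomes `α`-logconcave for every `1 ≤ α < 2`. -/
theorem eventually_alpha_logconcave
    (N : ℕ) (hN : 1 ≤ N) (u₀ : EuclideanSpace ℝ (Fin N) → ℝ)
    (hmeas : Measurable u₀) (h0 : ∀ x, 0 ≤ u₀ x) (hbd : ∃ M : ℝ, ∀ x, u₀ x ≤ M)
    (hsupp : HasCompactSupport u₀) (hint : 0 < ∫ y, u₀ y) :
    ∀ α : ℝ, 1 ≤ α → α < 2 →
      ∃ T : ℝ, 0 < T ∧ ∀ t : ℝ, T ≤ t →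
        (∀ x, 0 < heatSol N u₀ t x ∧ heatSol N u₀ t x < 1) ∧
        ERealConcaveOn (fun x => Lfun α (heatSol N u₀ t x)) ∧
        AlphaLogConcave α (heatSol N u₀ t) := by
  intro α hα hα2
  obtain ⟨μ, R, _, _, hμ, h_heat⟩ := exists_heatMeasure_eq_heatSol h0 hsupp hint
  exact h_heat ▸ eventually_alpha_logconcave_general hN μ hμ (one_pos.trans_le hα) hα2
end

section
/- Let α ≥ 1, let Ω be a convex set in ℝ^N, and let u : Ω → ℝ satisfy 0 ≤ u ≤ 1 on Ω. If the function x ↦ L_α(u(x)) is concave on Ω (as an (ℝ ∪ {-∞})-valued function), then for every κ with 0 < κ ≤ 1 the function x ↦ L_α(κ u(x)) is concave on Ω. -/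
/-!
On `{u > 0}`, concavity of `L_α(u)` says that `g = (-log u)^{1/α}` is convex. Scaling by `κ` adds
the constant `-log κ ≥ 0` to `-log u`, so with `c = (-log κ)^{1/α}` it replaces `g` by
`(g^α + c^α)^{1/α}`, the `ℓ^α` norm of the pair `(g, c)`. For `α ≥ 1` Minkowski's inequality makes
this norm convex, and it is increasing in its nonnegative entries, so the new function is convex.
-/

open MeasureTheory Real

theorem Lp_sum_mul_left {ι : Type*} (t : Finset ι) {p a : ℝ} (hp : p ≠ 0) (ha : 0 ≤ a) {v : ι → ℝ}
    (hv : ∀ i ∈ t, 0 ≤ v i) :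
    (∑ i ∈ t, (a * v i) ^ p) ^ (1 / p) = a * (∑ i ∈ t, v i ^ p) ^ (1 / p) := by
  have hsum : ∑ i ∈ t, (a * v i) ^ p = a ^ p * ∑ i ∈ t, v i ^ p := by
    rw [Finset.mul_sum]
    exact Finset.sum_congr rfl fun i hi => mul_rpow ha (hv i hi)
  rw [hsum, mul_rpow (rpow_nonneg ha p)
    (Finset.sum_nonneg fun i hi => rpow_nonneg (hv i hi) p), one_div, rpow_rpow_inv ha hp]

section

variable {E : Type*} [AddCommGroup E] [Module ℝ E]

theorem ERealConcaveOnSet.concaveOn_of_ite_bot {Ω : Set E} (hΩ : Convex ℝ Ω) {P : E → Prop}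
    [DecidablePred P] {f : E → ℝ}
    (h : ERealConcaveOnSet Ω (fun x => if P x then (f x : EReal) else ⊥)) :
    ConcaveOn ℝ {x ∈ Ω | P x} f := by
  have combo : ∀ x ∈ {x ∈ Ω | P x}, ∀ y ∈ {x ∈ Ω | P x}, ∀ a b : ℝ, 0 ≤ a → 0 ≤ b →
      a + b = 1 → P (a • x + b • y) ∧ a * f x + b * f y ≤ f (a • x + b • y) := by
    rintro x ⟨hxΩ, hx⟩ y ⟨hyΩ, hy⟩ a b ha hb hab
    obtain rfl : a = 1 - b := eq_sub_of_add_eq hab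
    have hle := h x hxΩ y hyΩ b hb (sub_nonneg.mp ha)
    simp only [if_pos hx, if_pos hy] at hle
    by_cases hz : P ((1 - b) • x + b • y)
    · rw [if_pos hz] at hle
      exact ⟨hz, mod_cast hle⟩
    · rw [if_neg hz] at hle
      exact absurd (le_bot_iff.mp hle) (EReal.coe_ne_bot ((1 - b) * f x + b * f y))
  exact ⟨fun x hx y hy a b ha hb hab =>
      ⟨hΩ hx.1 hy.1 ha hb hab, (combo x hx y hy a b ha hb hab).1⟩,
    fun x hx y hy a b ha hb hab => (combo x hx y hy a b ha hb hab).2⟩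

theorem ERealConcaveOnSet.ite_bot_of_concaveOn {Ω : Set E} {P : E → Prop} [DecidablePred P]
    {f : E → ℝ} (h : ConcaveOn ℝ {x ∈ Ω | P x} f) :
    ERealConcaveOnSet Ω (fun x => if P x then (f x : EReal) else ⊥) := by
  intro x hxΩ y hyΩ μ hμ₀ hμ₁
  -- The endpoints are separate because `0 * ⊥ = 0` in `EReal`.
  rcases hμ₀.eq_or_lt with rfl | hμ_pos
  · simp
  rcases hμ₁.eq_or_lt with rfl | hμ_lt
  · simp
  by_cases hx : P x
  · by_cases hy : P y
    · have hz := h.1 ⟨hxΩ, hx⟩ ⟨hyΩ, hy⟩ (sub_nonneg.mpr hμ₁) hμ₀ (sub_add_cancel 1 μ)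
      have hle := h.2 ⟨hxΩ, hx⟩ ⟨hyΩ, hy⟩ (sub_nonneg.mpr hμ₁) hμ₀ (sub_add_cancel 1 μ)
      simp only [if_pos hx, if_pos hy, if_pos hz.2]
      exact mod_cast hle
    · simp [hy, EReal.coe_mul_bot_of_pos hμ_pos]
  · simp only [if_neg hx, EReal.coe_mul_bot_of_pos (sub_pos.mpr hμ_lt), EReal.bot_add, bot_le]

theorem erealConcaveOnSet_ite_bot_iff {Ω : Set E} (hΩ : Convex ℝ Ω) {P : E → Prop}
    [DecidablePred P] {f : E → ℝ} :
    ERealConcaveOnSet Ω (fun x => if P x then (f x : EReal) else ⊥) ↔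
      ConcaveOn ℝ {x ∈ Ω | P x} f :=
  ⟨fun h => h.concaveOn_of_ite_bot hΩ, ERealConcaveOnSet.ite_bot_of_concaveOn⟩

theorem erealConcaveOnSet_Lfun_comp_iff {Ω : Set E} (hΩ : Convex ℝ Ω) {α : ℝ} {u : E → ℝ} :
    ERealConcaveOnSet Ω (fun x => Lfun α (u x)) ↔
      ConvexOn ℝ {x ∈ Ω | 0 < u x} (fun x => (-log (u x)) ^ (1 / α)) :=
  (erealConcaveOnSet_ite_bot_iff hΩ).trans neg_concaveOn_iff

theorem convexOn_Lp_sum {ι : Type*} {t : Finset ι} {p : ℝ} (hp : 1 ≤ p) {s : Set E}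
    (hs : Convex ℝ s) {f : ι → E → ℝ} (hf : ∀ i ∈ t, ConvexOn ℝ s (f i))
    (hf₀ : ∀ i ∈ t, ∀ x ∈ s, 0 ≤ f i x) :
    ConvexOn ℝ s (fun x => (∑ i ∈ t, f i x ^ p) ^ (1 / p)) := by
  have hp₀ : 0 < p := one_pos.trans_le hp
  refine ⟨hs, fun x hx y hy a b ha hb hab => ?_⟩
  have hz : a • x + b • y ∈ s := hs hx hy ha hb hab
  calc (∑ i ∈ t, f i (a • x + b • y) ^ p) ^ (1 / p)
      ≤ (∑ i ∈ t, (a * f i x + b * f i y) ^ p) ^ (1 / p) := by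
        refine rpow_le_rpow (Finset.sum_nonneg fun i hi => rpow_nonneg (hf₀ i hi _ hz) p)
          (Finset.sum_le_sum fun i hi => ?_) (one_div_nonneg.mpr hp₀.le)
        exact rpow_le_rpow (hf₀ i hi _ hz) ((hf i hi).2 hx hy ha hb hab) hp₀.le
    _ ≤ (∑ i ∈ t, (a * f i x) ^ p) ^ (1 / p) + (∑ i ∈ t, (b * f i y) ^ p) ^ (1 / p) :=
        Lp_add_le_of_nonneg t hp (fun i hi => mul_nonneg ha (hf₀ i hi x hx))
          fun i hi => mul_nonneg hb (hf₀ i hi y hy)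
    _ = a * (∑ i ∈ t, f i x ^ p) ^ (1 / p) + b * (∑ i ∈ t, f i y ^ p) ^ (1 / p) := by
        rw [Lp_sum_mul_left t hp₀.ne' ha fun i hi => hf₀ i hi x hx,
          Lp_sum_mul_left t hp₀.ne' hb fun i hi => hf₀ i hi y hy]

theorem convexOn_rpow_add_const {p c : ℝ} (hp : 1 ≤ p) (hc : 0 ≤ c) {s : Set E} {f : E → ℝ}
    (hf₀ : ∀ x ∈ s, 0 ≤ f x) (hf : ConvexOn ℝ s (fun x => f x ^ (1 / p))) :
    ConvexOn ℝ s (fun x => (f x + c) ^ (1 / p)) := by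
  have hp₀ : p ≠ 0 := (one_pos.trans_le hp).ne'
  have hLp : ConvexOn ℝ s
      (fun x => (∑ i, (![fun x => f x ^ (1 / p), fun _ => c ^ (1 / p)] i x) ^ p) ^ (1 / p)) := by
    refine convexOn_Lp_sum hp hf.1 ?_ ?_
    · simp only [Finset.mem_univ, forall_const, Fin.forall_fin_two]
      exact ⟨hf, convexOn_const _ hf.1⟩
    · simp only [Finset.mem_univ, forall_const, Fin.forall_fin_two]
      exact ⟨fun x hx => rpow_nonneg (hf₀ x hx) _, fun _ _ => rpow_nonneg hc _⟩
  refine hLp.congr fun x hx => ?_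
  simp [Fin.sum_univ_two, rpow_inv_rpow (hf₀ x hx) hp₀, rpow_inv_rpow hc hp₀]

theorem Lalpha_concave_of_scale_general {α : ℝ} (hα : 1 ≤ α) {Ω : Set E} (hΩ : Convex ℝ Ω)
    {u : E → ℝ} (hu : ∀ x ∈ Ω, u x ≤ 1)
    (hconc : ERealConcaveOnSet Ω (fun x => Lfun α (u x))) {κ : ℝ} (hκ₀ : 0 < κ) (hκ₁ : κ ≤ 1) :
    ERealConcaveOnSet Ω (fun x => Lfun α (κ * u x)) := by
  rw [erealConcaveOnSet_Lfun_comp_iff hΩ] at hconc ⊢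
  simp only [mul_pos_iff_of_pos_left hκ₀]
  have hconv : ConvexOn ℝ {x ∈ Ω | 0 < u x} (fun x => (-log (u x) + -log κ) ^ (1 / α)) :=
    convexOn_rpow_add_const hα (neg_nonneg.mpr (log_nonpos hκ₀.le hκ₁))
      (fun x hx => neg_nonneg.mpr (log_nonpos hx.2.le (hu x hx.1))) hconc
  refine hconv.congr fun x hx => ?_
  simp only [log_mul hκ₀.ne' hx.2.ne', neg_add_rev]

end

/-- Lemma 2.1: For `α ≥ 1`, if `L_α(u)` is concave on a convex set `Ω`
with `0 ≤ u ≤ 1`, then `L_α(κu)` is concave on `Ω` for every `0 < κ ≤ 1`. -/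
theorem Lalpha_concave_of_scale
    (N : ℕ) (α : ℝ) (hα : 1 ≤ α) (Ω : Set (EuclideanSpace ℝ (Fin N)))
    (hΩ : Convex ℝ Ω) (u : EuclideanSpace ℝ (Fin N) → ℝ)
    (h0 : ∀ x ∈ Ω, 0 ≤ u x) (h1 : ∀ x ∈ Ω, u x ≤ 1)
    (hconc : ERealConcaveOnSet Ω (fun x => Lfun α (u x))) :
    ∀ κ : ℝ, 0 < κ → κ ≤ 1 → ERealConcaveOnSet Ω (fun x => Lfun α (κ * u x)) :=
  fun _ hκ₀ hκ₁ => Lalpha_concave_of_scale_general hα hΩ h1 hconc hκ₀ hκ₁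
end
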